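/- Let φ = ∑_{ℓ mod 2m} h_ℓ·θ_{m,ℓ} be a mock Jacobi form of weight 2 and index m with optimal growth, with coefficients C(Δ,ℓ). Then for each r ∈ ℤ, as Δ → +∞ through integers with Δ ≡ −r² (mod 4m), one has C(Δ,r) = κ_r·e^{π√Δ/m} + O(e^{π√Δ/(2m)}), where κ_r := −∑_{ℓ mod 2m, ℓ² ≡ 1 (mod 4m)} C(−1,ℓ)·cos(πℓr/m). -/

import Mathlib

noncomputable section

open Complex Filter Topology MeasureTheory
open scoped Classical

/-- `ee x = e^{2πix}`. -/
def ee (x : ℂ) : ℂ := Complex.exp (2 * (Real.pi : ℂ) * Complex.I * x)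

/-- The index-`m` elliptic transformation law on `ℍ × ℂ`. -/
def EllipticLaw (m : ℕ) (φ : ℂ → ℂ → ℂ) : Prop :=
  ∀ τ : ℂ, 0 < τ.im → ∀ z : ℂ, ∀ lam mu : ℤ,
    φ τ (z + (lam : ℂ) * τ + (mu : ℂ)) =
      ee (-(m : ℂ) * ((lam : ℂ) ^ 2 * τ + 2 * (lam : ℂ) * z)) * φ τ z

/-- The weight-`k` index-`m` modular transformation law on `ℍ × ℂ`. -/
def ModularLaw (k : ℤ) (m : ℕ) (φ : ℂ → ℂ → ℂ) : Prop :=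
  ∀ τ : ℂ, 0 < τ.im → ∀ z : ℂ, ∀ a b c d : ℤ, a * d - b * c = 1 →
    φ (((a : ℂ) * τ + (b : ℂ)) / ((c : ℂ) * τ + (d : ℂ))) (z / ((c : ℂ) * τ + (d : ℂ))) =
      ((c : ℂ) * τ + (d : ℂ)) ^ k *
        ee ((m : ℂ) * (c : ℂ) * z ^ 2 / ((c : ℂ) * τ + (d : ℂ))) * φ τ z

/-- The theta function `θ_{m,ℓ}(τ,z) = ∑_{r ≡ ℓ (mod 2m)} q^{r²/4m} y^r`. -/
def jTheta (m : ℕ) (l : ℤ) (τ z : ℂ) : ℂ :=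
  ∑' n : ℤ, ee (((l : ℂ) + 2 * (m : ℂ) * (n : ℂ)) ^ 2 / (4 * (m : ℂ)) * τ +
      ((l : ℂ) + 2 * (m : ℂ) * (n : ℂ)) * z)

/-- The point `z_s = ατ + β` for `s = (α,β) ∈ ℚ²`. -/
def zpt (s : ℚ × ℚ) (τ : ℂ) : ℂ := (s.1 : ℚ) * τ + (s.2 : ℚ)

/-- The nonholomorphic Eichler integral
`g*(τ) = (i/2π)^{1/2} ∫_{-conj(τ)}^{i∞} (z+τ)^{-3/2}·conj(g(-conj z)) dz`, the integral
taken along the vertical line upward from `-conj(τ)` (parametrized by `z = -conj(τ) + it`,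
`t ∈ (0,∞)`, so that `-conj z = τ + it` and `dz = i dt`), with principal branches. -/
def eich (g : ℂ → ℂ) (τ : ℂ) : ℂ :=
  (Complex.I / (2 * (Real.pi : ℂ))) ^ ((1 : ℂ) / 2) *
    ∫ t in Set.Ioi (0 : ℝ),
      ((-(starRingEnd ℂ) τ + Complex.I * (t : ℂ)) + τ) ^ (-(3 : ℂ) / 2) *
        (starRingEnd ℂ) (g (τ + Complex.I * (t : ℂ))) * Complex.I

/-- `κ_r = -∑_{ℓ mod 2m, ℓ² ≡ 1 (mod 4m)} C(-1,ℓ)·cos(πℓr/m)`. -/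
def kapp (m : ℕ) (C : ℤ → ℤ → ℂ) (r : ℤ) : ℂ :=
  -∑ l ∈ (Finset.range (2 * m)).filter (fun l => (4 * (m : ℤ)) ∣ ((l : ℤ) ^ 2 - 1)),
      C (-1) (l : ℤ) * (Real.cos (Real.pi * (l : ℝ) * (r : ℝ) / (m : ℝ)) : ℂ)

/-!
For `Δ > 0` the coefficient `C(Δ, r)` is the Fourier integral of the completed theta coefficient
`ĥ_r = h_r + g_r*` over a horizontal line: apart from its kernel, which is constant on the line,
`g_r*` is conjugate-holomorphic and only contributes frequencies `≤ 0`. At height `1/(2√Δ)` the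
factor `e^{-2πiτΔ/4m}` has size `e^{π√Δ/4m}`. The vector `(ĥ_ℓ)` transforms under the Weil
representation, so near `τ = 0` inversion exhibits the polar terms `C(-1, ℓ) q^{-1/4m}` as a
multiple of `s^{-3/2} e^{π/2ms}`, `s = -iτ`, whose Laplace inversion is a `sinh` and gives the
leading term. For the remaining `τ`, the norm `∑ |ĥ_ℓ|²` is invariant up to the weight, so `ĥ_r`
grows at most like the polar terms at a cusp `-d/c` with `|c| ≥ 2`. That growth is at most
`e^{π√Δ/4m}` and costs no power of `Δ` on integration: it decays like a Gaussian away from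
`x = ±1/2` if `|c| = 2`, and is exponentially smaller if `|c| ≥ 3`.
-/

section Exponential

lemma ee_add (x y : ℂ) : ee (x + y) = ee x * ee y := by
  simp only [ee, mul_add, Complex.exp_add]

lemma ee_neg (x : ℂ) : ee (-x) = (ee x)⁻¹ := by
  simp only [ee, mul_neg, Complex.exp_neg]

@[simp] lemma ee_zero : ee 0 = 1 := by simp [ee]

lemma ee_ne_zero (x : ℂ) : ee x ≠ 0 := Complex.exp_ne_zero _

lemma ee_eq_one_iff {x : ℂ} : ee x = 1 ↔ ∃ n : ℤ, x = n := by
  simp only [ee, Complex.exp_eq_one_iff, mul_comm (2 * (Real.pi : ℂ) * I),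
    mul_left_inj' Complex.two_pi_I_ne_zero]

@[simp] lemma ee_intCast (n : ℤ) : ee n = 1 := ee_eq_one_iff.2 ⟨n, rfl⟩

lemma ee_add_intCast (x : ℂ) (n : ℤ) : ee (x + n) = ee x := by
  rw [ee_add, ee_intCast, mul_one]

lemma ee_nat_mul (n : ℕ) (x : ℂ) : ee (n * x) = ee x ^ n := by
  rw [ee, ee, ← Complex.exp_nat_mul]
  ring_nf

lemma norm_ee (x : ℂ) : ‖ee x‖ = Real.exp (-(2 * Real.pi * x.im)) := by
  rw [ee, Complex.norm_exp]
  simp [Complex.mul_re]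

lemma norm_ee_eq_one {x : ℂ} (hx : x.im = 0) : ‖ee x‖ = 1 := by simp [norm_ee, hx]

lemma conj_ee (x : ℂ) : (starRingEnd ℂ) (ee x) = ee (-(starRingEnd ℂ) x) := by
  rw [ee, ee, ← Complex.exp_conj]
  simp [map_ofNat]

lemma differentiable_ee : Differentiable ℂ ee := by
  unfold ee
  fun_prop

@[fun_prop] lemma continuous_ee : Continuous ee := differentiable_ee.continuous

lemma integral_ee_int_mul (d : ℤ) :
    ∫ x in (-(1 / 2) : ℝ)..(1 / 2), ee (d * x) = if d = 0 then 1 else 0 := by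
  split_ifs with hd
  · simp only [hd, Int.cast_zero, zero_mul, ee_zero, intervalIntegral.integral_const]
    norm_num
  · have hne : 2 * (Real.pi : ℂ) * I * d ≠ 0 := mul_ne_zero Complex.two_pi_I_ne_zero (by simpa)
    have hperiod : ee (d * ((1 / 2 : ℝ) : ℂ)) = ee (d * ((-(1 / 2) : ℝ) : ℂ)) := by
      rw [← ee_add_intCast (d * ((-(1 / 2) : ℝ) : ℂ)) d]
      push_cast
      ring_nf
    simp only [ee, ← mul_assoc] at hperiod ⊢
    rw [integral_exp_mul_complex hne, hperiod, sub_self, zero_div]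

lemma integral_eq_tsum_of_hasSum_mul_ee {ι : Type*} [Countable ι] {c : ι → ℂ} {d : ι → ℤ}
    {F : ℝ → ℂ} (hc : Summable c) (hF : ∀ x : ℝ, HasSum (fun i => c i * ee (d i * x)) (F x)) :
    ∫ x in (-(1 / 2) : ℝ)..(1 / 2), F x = ∑' i, if d i = 0 then c i else 0 := by
  have hsum := intervalIntegral.hasSum_integral_of_dominated_convergence
    (a := -(1 / 2)) (b := 1 / 2) (μ := volume) (F := fun i (x : ℝ) => c i * ee (d i * x)) (f := F)
    (fun i _ => ‖c i‖) (fun i => Continuous.aestronglyMeasurable (by fun_prop))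
    (fun i => .of_forall fun x _ => by simp [norm_ee])
    (.of_forall fun _ _ => hc.norm) intervalIntegrable_const (.of_forall fun x _ => hF x)
  rw [← hsum.tsum_eq]
  refine tsum_congr fun i => ?_
  rw [intervalIntegral.integral_const_mul, integral_ee_int_mul, mul_ite, mul_one, mul_zero]

lemma tsum_int_eq_sum_range_tsum {N : ℕ} (hN : 0 < N) {f : ℤ → ℂ} (hf : Summable f) :
    ∑' n, f n = ∑ l ∈ Finset.range N, ∑' n : ℤ, f (l + N * n) := by
  have : NeZero N := ⟨hN.ne'⟩
  let e : Fin N × ℤ ≃ ℤ := (Equiv.prodComm _ _).trans (Int.divModEquiv N).symm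
  have hsum : Summable fun p => f (e p) := e.summable_iff.2 hf
  rw [← e.tsum_eq f, hsum.tsum_prod, tsum_fintype, Finset.sum_range]
  refine Finset.sum_congr rfl fun i _ => tsum_congr fun n => congrArg f ?_
  change (n : ℤ) * N + i = i + N * n
  ring

lemma sum_range_ee_div {N : ℕ} (hN : 0 < N) (d : ℤ) :
    ∑ k ∈ Finset.range N, ee (d * k / N) = if (N : ℤ) ∣ d then (N : ℂ) else 0 := by
  have hN' : (N : ℂ) ≠ 0 := by exact_mod_cast hN.ne'
  have hpow (k : ℕ) : ee (d * k / N) = ee (d / N) ^ k := by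
    rw [← ee_nat_mul]
    ring_nf
  have hroot : ee (d / N) = 1 ↔ (N : ℤ) ∣ d := by
    simp only [ee_eq_one_iff, div_eq_iff hN', dvd_def, mul_comm (N : ℤ)]
    exact_mod_cast Iff.rfl
  simp only [hpow]
  split_ifs with hd
  · simp [hroot.2 hd]
  · rw [geom_sum_eq (mt hroot.1 hd), ← hpow, mul_div_cancel_right₀ _ hN', ee_intCast, sub_self,
      zero_div]

lemma sum_norm_sq_dft {N : ℕ} (hN : 0 < N) (c : ℕ → ℂ) :
    ∑ k ∈ Finset.range N, ‖∑ l ∈ Finset.range N, ee (l * k / N) * c l‖ ^ 2 =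
      N * ∑ l ∈ Finset.range N, ‖c l‖ ^ 2 := by
  have horth {l j : ℕ} (hl : l ∈ Finset.range N) (hj : j ∈ Finset.range N) :
      ∑ k ∈ Finset.range N, ee (l * k / N) * (starRingEnd ℂ) (ee (j * k / N)) =
        if j = l then (N : ℂ) else 0 := by
    rw [Finset.mem_range] at hl hj
    have hdvd : (N : ℤ) ∣ (l : ℤ) - j ↔ j = l := by
      rw [← Int.modEq_iff_dvd, Int.natCast_modEq_iff]
      exact ⟨fun h => Nat.ModEq.eq_of_lt_of_lt h hj hl, fun h => h ▸ rfl⟩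
    rw [← if_congr hdvd rfl rfl, ← sum_range_ee_div hN]
    refine Finset.sum_congr rfl fun k _ => ?_
    rw [conj_ee, ← ee_add]
    simp only [map_div₀, map_mul, map_natCast]
    push_cast
    ring_nf
  apply Complex.ofReal_injective
  push_cast
  simp only [← Complex.mul_conj', map_sum, map_mul, Finset.sum_mul_sum]
  rw [Finset.sum_comm, Finset.mul_sum]
  refine Finset.sum_congr rfl fun l hl => ?_
  rw [Finset.sum_comm]
  simp only [mul_mul_mul_comm _ (c l), ← Finset.sum_mul]
  rw [Finset.sum_congr rfl fun j hj => by rw [horth hl hj]]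
  simp [hl]

end Exponential

section UpperHalfPlane

lemma ne_zero_of_im_pos {τ : ℂ} (hτ : 0 < τ.im) : τ ≠ 0 := by
  rintro rfl
  simp at hτ

lemma im_neg_one_div (τ : ℂ) : (-1 / τ).im = τ.im / ‖τ‖ ^ 2 := by
  rw [neg_div, Complex.neg_im, one_div, Complex.inv_im, Complex.normSq_eq_norm_sq]
  ring

lemma im_neg_one_div_pos {τ : ℂ} (hτ : 0 < τ.im) : 0 < (-1 / τ).im := by
  rw [im_neg_one_div]
  have := norm_pos_iff.2 (ne_zero_of_im_pos hτ)
  positivity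

lemma im_two_mul_natCast_mul_pos {m : ℕ} (hm : 0 < m) {τ : ℂ} (hτ : 0 < τ.im) :
    0 < (2 * (m : ℂ) * τ).im := by
  have him : (2 * (m : ℂ) * τ).im = 2 * m * τ.im := by simp [Complex.mul_im]
  rw [him]
  positivity

end UpperHalfPlane

section Theta

variable {m : ℕ}

lemma jTheta_term_eq (hm : 0 < m) (l : ℤ) (τ z : ℂ) (n : ℤ) :
    ee (((l : ℂ) + 2 * (m : ℂ) * (n : ℂ)) ^ 2 / (4 * (m : ℂ)) * τ +
      ((l : ℂ) + 2 * (m : ℂ) * (n : ℂ)) * z) =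
    ee ((l : ℂ) ^ 2 / (4 * m) * τ + l * z) *
      jacobiTheta₂_term n (l * τ + 2 * m * z) (2 * m * τ) := by
  have : (m : ℂ) ≠ 0 := by exact_mod_cast hm.ne'
  rw [ee, ee, jacobiTheta₂_term, ← Complex.exp_add]
  congr 1
  field_simp
  ring

lemma hasSum_jTheta (hm : 0 < m) (l : ℤ) {τ : ℂ} (hτ : 0 < τ.im) (z : ℂ) :
    HasSum (fun n : ℤ => ee (((l : ℂ) + 2 * (m : ℂ) * (n : ℂ)) ^ 2 / (4 * (m : ℂ)) * τ +
      ((l : ℂ) + 2 * (m : ℂ) * (n : ℂ)) * z)) (jTheta m l τ z) := by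
  refine Summable.hasSum ?_
  simp only [jTheta_term_eq hm]
  exact ((summable_jacobiTheta₂_term_iff _ _).2 (im_two_mul_natCast_mul_pos hm hτ)).mul_left _

lemma jTheta_eq_ee_mul_jacobiTheta₂ (hm : 0 < m) (l : ℤ) (τ z : ℂ) :
    jTheta m l τ z =
      ee ((l : ℂ) ^ 2 / (4 * m) * τ + l * z) * jacobiTheta₂ (l * τ + 2 * m * z) (2 * m * τ) := by
  simp only [jTheta, jTheta_term_eq hm, tsum_mul_left, jacobiTheta₂]

lemma continuous_jTheta (hm : 0 < m) (l : ℤ) {τ : ℂ} (hτ : 0 < τ.im) :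
    Continuous fun z => jTheta m l τ z := by
  have hjacobi : Continuous fun z => jacobiTheta₂ z (2 * m * τ) := continuous_iff_continuousAt.2
    fun z => (differentiableAt_jacobiTheta₂_fst z (im_two_mul_natCast_mul_pos hm hτ)).continuousAt
  simp only [jTheta_eq_ee_mul_jacobiTheta₂ hm]
  fun_prop

lemma jTheta_add_one (hm : 0 < m) (l : ℤ) (τ z : ℂ) :
    jTheta m l (τ + 1) z = ee ((l : ℂ) ^ 2 / (4 * m)) * jTheta m l τ z := by
  have hm' : (m : ℂ) ≠ 0 := by exact_mod_cast hm.ne'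
  rw [jTheta, jTheta, ← tsum_mul_left]
  refine tsum_congr fun n => ?_
  rw [← ee_add_intCast ((l : ℂ) ^ 2 / (4 * m)) (l * n + m * n ^ 2), ← ee_add]
  push_cast
  field_simp
  ring_nf

lemma jacobiTheta₂_neg_one_div (hm : 0 < m) (l : ℤ) {τ : ℂ} (hτ : 0 < τ.im) (z : ℂ) :
    jacobiTheta₂ ((l * τ + 2 * m * z) / (2 * m * τ)) (-1 / (2 * m * τ)) =
      ∑ j ∈ Finset.range (2 * m), ee (l * j / (2 * m)) * jTheta m j (-1 / τ) (z / τ) := by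
  have hm' : (m : ℂ) ≠ 0 := by exact_mod_cast hm.ne'
  have hτ0 := ne_zero_of_im_pos hτ
  rw [jacobiTheta₂, tsum_int_eq_sum_range_tsum (N := 2 * m) (by omega)
    ((summable_jacobiTheta₂_term_iff _ _).2
      (im_neg_one_div_pos (im_two_mul_natCast_mul_pos hm hτ)))]
  refine Finset.sum_congr rfl fun j _ => ?_
  rw [jTheta, ← tsum_mul_left]
  refine tsum_congr fun n => ?_
  rw [← ee_add_intCast (l * j / (2 * m)) (l * n), ← ee_add, jacobiTheta₂_term, ee]
  congr 1
  push_cast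
  field_simp
  ring

lemma jTheta_eq_sum_neg_one_div (hm : 0 < m) (l : ℤ) {τ : ℂ} (hτ : 0 < τ.im) (z : ℂ) :
    jTheta m l τ z = 1 / (-I * (2 * m * τ)) ^ (1 / 2 : ℂ) * ee (-(m * z ^ 2 / τ)) *
      ∑ j ∈ Finset.range (2 * m), ee (l * j / (2 * m)) * jTheta m j (-1 / τ) (z / τ) := by
  have hm' : (m : ℂ) ≠ 0 := by exact_mod_cast hm.ne'
  have hτ0 := ne_zero_of_im_pos hτ
  have hexp : ee ((l : ℂ) ^ 2 / (4 * m) * τ + l * z) *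
      cexp (-Real.pi * I * (l * τ + 2 * m * z) ^ 2 / (2 * m * τ)) = ee (-(m * z ^ 2 / τ)) := by
    rw [ee, ee, ← Complex.exp_add]
    congr 1
    field_simp
    ring
  rw [jTheta_eq_ee_mul_jacobiTheta₂ hm, jacobiTheta₂_functional_equation,
    jacobiTheta₂_neg_one_div hm l hτ z, ← hexp]
  ring

lemma integral_jTheta_mul_ee_neg (hm : 0 < m) {j l : ℕ} (hj : j < 2 * m) (hl : l < 2 * m)
    {τ : ℂ} (hτ : 0 < τ.im) :
    ∫ x in (-(1 / 2) : ℝ)..(1 / 2), jTheta m l τ x * ee (-j * x) =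
      if l = j then ee ((j : ℂ) ^ 2 / (4 * m) * τ) else 0 := by
  have hsummable := (hasSum_jTheta hm l hτ 0).summable
  have hzero (n : ℤ) : (l : ℤ) + 2 * m * n - j = 0 ↔ n = 0 ∧ l = j := by
    refine ⟨fun h => ?_, by rintro ⟨rfl, rfl⟩; simp⟩
    have hdvd : ((2 * m : ℕ) : ℤ) ∣ (j : ℤ) - l := ⟨n, by push_cast; linarith⟩
    have hjl := Int.eq_zero_of_abs_lt_dvd hdvd (by rw [abs_lt]; constructor <;> omega)
    have hn : (2 * m : ℤ) * n = 0 := by linarith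
    have hm' : (2 * m : ℤ) ≠ 0 := by omega
    exact ⟨(mul_eq_zero.1 hn).resolve_left hm', by omega⟩
  rw [integral_eq_tsum_of_hasSum_mul_ee (d := fun n : ℤ => l + 2 * m * n - j) hsummable fun x => ?_]
  · simp only [hzero]
    split_ifs with hlj
    · rw [tsum_eq_single 0 fun n hn => if_neg fun h => hn h.1]
      simp [hlj]
    · exact (tsum_congr fun n => if_neg fun h => hlj h.2).trans tsum_zero
  · refine ((hasSum_jTheta hm l hτ x).mul_right (ee (-j * x))).congr_fun fun n => ?_
    rw [← ee_add, ← ee_add]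
    push_cast
    ring_nf

lemma eq_zero_of_sum_mul_jTheta_eq_zero (hm : 0 < m) {τ : ℂ} (hτ : 0 < τ.im) {c : ℕ → ℂ}
    (hc : ∀ z : ℂ, ∑ l ∈ Finset.range (2 * m), c l * jTheta m l τ z = 0) {j : ℕ}
    (hj : j < 2 * m) : c j = 0 := by
  have hcont (l : ℕ) := continuous_jTheta hm l hτ
  have hint : ∫ x in (-(1 / 2) : ℝ)..(1 / 2),
      ∑ l ∈ Finset.range (2 * m), c l * (jTheta m l τ x * ee (-j * x)) = 0 := by
    simp only [← mul_assoc, ← Finset.sum_mul, hc, zero_mul, intervalIntegral.integral_zero]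
  rw [intervalIntegral.integral_finsetSum fun l _ =>
      Continuous.intervalIntegrable (by have := hcont l; fun_prop) _ _,
    Finset.sum_congr rfl fun l hl => by rw [intervalIntegral.integral_const_mul,
      integral_jTheta_mul_ee_neg hm hj (Finset.mem_range.1 hl) hτ]] at hint
  simpa [hj, ee_ne_zero] using hint

end Theta

section ThetaCoefficients

/-- The theta series `∑_ℓ H_ℓ θ_{m,ℓ}` of a family indexed by the residues `0, …, 2m - 1`. -/
def thetaCombination (m : ℕ) (H : ℤ → ℂ → ℂ) (τ z : ℂ) : ℂ :=
  ∑ l ∈ Finset.range (2 * m), H (l : ℤ) τ * jTheta m (l : ℤ) τ z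

/-- The transformation laws, under the generators `T` and `S` of `SL(2, ℤ)`, of the theta
coefficients of a weight-`k` index-`m` Jacobi form: vector-valued modularity of weight `k - 1/2`
for the dual Weil representation. -/
structure IsWeilVector (k : ℤ) (m : ℕ) (H : ℤ → ℂ → ℂ) : Prop where
  add_one : ∀ {j : ℕ}, j < 2 * m → ∀ {τ : ℂ}, 0 < τ.im →
    H j (τ + 1) = ee (-((j : ℂ) ^ 2 / (4 * m))) * H j τ
  neg_one_div : ∀ {j : ℕ}, j < 2 * m → ∀ {τ : ℂ}, 0 < τ.im →
    H j (-1 / τ) = τ ^ k / (-I * (2 * m * τ)) ^ (1 / 2 : ℂ) *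
      ∑ l ∈ Finset.range (2 * m), ee (l * j / (2 * m)) * H l τ

variable {k : ℤ} {m : ℕ} {H : ℤ → ℂ → ℂ}

lemma ModularLaw.thetaCoeff_add_one (hmod : ModularLaw k m (thetaCombination m H)) (hm : 0 < m)
    {j : ℕ} (hj : j < 2 * m) {τ : ℂ} (hτ : 0 < τ.im) :
    H j (τ + 1) = ee (-((j : ℂ) ^ 2 / (4 * m))) * H j τ := by
  suffices H j (τ + 1) * ee ((j : ℂ) ^ 2 / (4 * m)) - H j τ = 0 by
    rw [ee_neg, ← sub_eq_zero.1 this, mul_comm, mul_assoc, mul_inv_cancel₀ (ee_ne_zero _), mul_one]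
  refine eq_zero_of_sum_mul_jTheta_eq_zero hm hτ
    (c := fun l => H l (τ + 1) * ee ((l : ℂ) ^ 2 / (4 * m)) - H l τ) (fun z => ?_) hj
  have htrans := hmod τ hτ z 1 1 0 1 (by norm_num)
  simp only [thetaCombination, jTheta_add_one hm, Int.cast_zero, Int.cast_one, Int.cast_natCast,
    zero_mul, one_mul, zero_add, mul_zero, one_zpow, div_one, ee_zero] at htrans
  simp only [sub_mul, Finset.sum_sub_distrib, mul_assoc, htrans, sub_self]

lemma ModularLaw.thetaCoeff_neg_one_div (hmod : ModularLaw k m (thetaCombination m H))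
    (hm : 0 < m) {j : ℕ} (hj : j < 2 * m) {τ : ℂ} (hτ : 0 < τ.im) :
    H j (-1 / τ) = τ ^ k / (-I * (2 * m * τ)) ^ (1 / 2 : ℂ) *
      ∑ l ∈ Finset.range (2 * m), ee (l * j / (2 * m)) * H l τ := by
  have hτ0 := ne_zero_of_im_pos hτ
  rw [← sub_eq_zero]
  refine eq_zero_of_sum_mul_jTheta_eq_zero hm (im_neg_one_div_pos hτ)
    (c := fun j => H j (-1 / τ) - τ ^ k / (-I * (2 * m * τ)) ^ (1 / 2 : ℂ) *
      ∑ l ∈ Finset.range (2 * m), ee (l * j / (2 * m)) * H l τ) (fun w => ?_) hj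
  have htrans := hmod τ hτ (w * τ) 0 (-1) 1 0 (by norm_num)
  simp only [Int.cast_zero, Int.cast_neg, Int.cast_one, zero_mul, one_mul, add_zero, zero_add,
    mul_one, mul_div_cancel_right₀ _ hτ0] at htrans
  have hcancel : ee (m * (w * τ) ^ 2 / τ) * ee (-(m * (w * τ) ^ 2 / τ)) = 1 := by
    rw [← ee_add, add_neg_cancel, ee_zero]
  have hexpand : thetaCombination m H τ (w * τ) =
      1 / (-I * (2 * m * τ)) ^ (1 / 2 : ℂ) * ee (-(m * (w * τ) ^ 2 / τ)) *
        ∑ j ∈ Finset.range (2 * m),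
          (∑ l ∈ Finset.range (2 * m), ee (l * j / (2 * m)) * H l τ) * jTheta m j (-1 / τ) w := by
    simp only [thetaCombination, jTheta_eq_sum_neg_one_div hm _ hτ (w * τ),
      mul_div_cancel_right₀ _ hτ0, Finset.mul_sum, Finset.sum_mul]
    rw [Finset.sum_comm]
    refine Finset.sum_congr rfl fun _ _ => Finset.sum_congr rfl fun _ _ => ?_
    push_cast
    ring
  rw [hexpand] at htrans
  simp only [sub_mul, Finset.sum_sub_distrib]
  rw [← thetaCombination, htrans, sub_eq_zero]
  simp only [mul_assoc (τ ^ k / _), ← Finset.mul_sum]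
  linear_combination (τ ^ k / (-I * (2 * m * τ)) ^ (1 / 2 : ℂ) *
    ∑ j ∈ Finset.range (2 * m),
      (∑ l ∈ Finset.range (2 * m), ee (l * j / (2 * m)) * H l τ) * jTheta m j (-1 / τ) w) * hcancel

lemma ModularLaw.isWeilVector (hmod : ModularLaw k m (thetaCombination m H)) (hm : 0 < m) :
    IsWeilVector k m H where
  add_one := hmod.thetaCoeff_add_one hm
  neg_one_div := hmod.thetaCoeff_neg_one_div hm

end ThetaCoefficients

section Petersson

/-- The square of the pointwise Petersson norm of a vector-valued form of weight `k - 1/2`. -/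
def peterssonSq (k : ℤ) (m : ℕ) (H : ℤ → ℂ → ℂ) (τ : ℂ) : ℝ :=
  τ.im ^ (k - 1 / 2 : ℝ) * ∑ l ∈ Finset.range (2 * m), ‖H l τ‖ ^ 2

namespace IsWeilVector

variable {k : ℤ} {m : ℕ} {H : ℤ → ℂ → ℂ}

lemma peterssonSq_add_one (hH : IsWeilVector k m H) {τ : ℂ} (hτ : 0 < τ.im) :
    peterssonSq k m H (τ + 1) = peterssonSq k m H τ := by
  have hphase (l : ℕ) : ‖ee (-((l : ℂ) ^ 2 / (4 * m)))‖ = 1 :=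
    norm_ee_eq_one (by
      rw [show -((l : ℂ) ^ 2 / (4 * m)) = ((-((l : ℝ) ^ 2 / (4 * m)) : ℝ) : ℂ) by push_cast; rfl]
      exact Complex.ofReal_im _)
  rw [peterssonSq, peterssonSq, Complex.add_im, Complex.one_im, add_zero]
  congr 1
  refine Finset.sum_congr rfl fun l hl => ?_
  rw [hH.add_one (Finset.mem_range.1 hl) hτ, norm_mul, hphase, one_mul]

lemma sum_norm_sq_neg_one_div (hH : IsWeilVector k m H) (hm : 0 < m) {τ : ℂ} (hτ : 0 < τ.im) :
    ∑ l ∈ Finset.range (2 * m), ‖H l (-1 / τ)‖ ^ 2 =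
      ‖τ‖ ^ (2 * (k - 1 / 2) : ℝ) * ∑ l ∈ Finset.range (2 * m), ‖H l τ‖ ^ 2 := by
  have hnorm : 0 < ‖τ‖ := norm_pos_iff.2 (ne_zero_of_im_pos hτ)
  have hfactor : ‖τ ^ k / (-I * (2 * m * τ)) ^ (1 / 2 : ℂ)‖ ^ 2 * (2 * m) =
      ‖τ‖ ^ (2 * (k - 1 / 2) : ℝ) := by
    have hhalf : (1 / 2 : ℂ) = ((1 / 2 : ℝ) : ℂ) := by push_cast; rfl
    rw [norm_div, norm_zpow, hhalf, Complex.norm_cpow_real, div_pow, ← Real.sqrt_eq_rpow,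
      Real.sq_sqrt (norm_nonneg _), mul_sub, Real.rpow_sub hnorm, mul_comm 2,
      Real.rpow_mul hnorm.le, Real.rpow_intCast, mul_one_div_cancel two_ne_zero, Real.rpow_one,
      Real.rpow_two]
    simp only [norm_mul, norm_neg, Complex.norm_I, Complex.norm_two, Complex.norm_natCast]
    field_simp
    rw [← zpow_natCast, ← zpow_natCast, ← zpow_mul, ← zpow_mul, mul_comm]
  rw [← hfactor, mul_assoc]
  have hparseval := sum_norm_sq_dft (N := 2 * m) (by omega) fun l => H l τ
  push_cast at hparseval
  rw [← hparseval, Finset.mul_sum]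
  refine Finset.sum_congr rfl fun l hl => ?_
  rw [hH.neg_one_div (Finset.mem_range.1 hl) hτ, norm_mul, mul_pow]

lemma peterssonSq_neg_one_div (hH : IsWeilVector k m H) (hm : 0 < m) {τ : ℂ} (hτ : 0 < τ.im) :
    peterssonSq k m H (-1 / τ) = peterssonSq k m H τ := by
  have hnorm : 0 < ‖τ‖ := norm_pos_iff.2 (ne_zero_of_im_pos hτ)
  rw [peterssonSq, peterssonSq, hH.sum_norm_sq_neg_one_div hm hτ, im_neg_one_div,
    Real.div_rpow hτ.le (by positivity), ← Real.rpow_two, ← Real.rpow_mul hnorm.le]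
  field_simp

lemma peterssonSq_smul (hH : IsWeilVector k m H) (hm : 0 < m)
    (γ : Matrix.SpecialLinearGroup (Fin 2) ℤ) (z : UpperHalfPlane) :
    peterssonSq k m H (γ • z : UpperHalfPlane) = peterssonSq k m H z := by
  have hγ : γ ∈ Subgroup.closure {ModularGroup.S, ModularGroup.T} := by
    rw [SpecialLinearGroup.SL2Z_generators]
    trivial
  induction hγ using Subgroup.closure_induction generalizing z with
  | mem γ hγ =>
    rcases hγ with rfl | rfl
    · rw [UpperHalfPlane.modular_S_smul, UpperHalfPlane.coe_mk, inv_neg, ← one_div, ← neg_div]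
      exact hH.peterssonSq_neg_one_div hm z.im_pos
    · rw [UpperHalfPlane.modular_T_smul, UpperHalfPlane.coe_vadd, add_comm, Complex.ofReal_one]
      exact hH.peterssonSq_add_one z.im_pos
  | one => rw [one_smul]
  | mul γ γ' _ _ hγ hγ' => rw [mul_smul, hγ, hγ']
  | inv γ _ hγ => rw [← hγ (γ⁻¹ • z), smul_inv_smul]

lemma exists_peterssonSq_eq (hH : IsWeilVector k m H) (hm : 0 < m) {τ : ℂ} (hτ : 0 < τ.im) :
    ∃ c d : ℤ, IsCoprime c d ∧ ∃ τ' : ℂ, τ'.im = τ.im / ‖c * τ + d‖ ^ 2 ∧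
      |τ'.re| ≤ 1 / 2 ∧ 1 / 2 ≤ τ'.im ∧ peterssonSq k m H τ' = peterssonSq k m H τ := by
  let z : UpperHalfPlane := ⟨τ, hτ⟩
  obtain ⟨γ, hγ⟩ := ModularGroup.exists_smul_mem_fd z
  refine ⟨γ 1 0, γ 1 1, ModularGroup.bottom_row_coprime γ, (γ • z : UpperHalfPlane), ?_, hγ.2, ?_,
    hH.peterssonSq_smul hm γ z⟩
  · rw [UpperHalfPlane.coe_im, ModularGroup.im_smul_eq_div_normSq, ModularGroup.denom_apply,
      Complex.normSq_eq_norm_sq]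
    rfl
  · have hfd := ModularGroup.three_le_four_mul_im_sq_of_mem_fd hγ
    have hpos := (γ • z).im_pos
    rw [UpperHalfPlane.coe_im]
    nlinarith

end IsWeilVector

lemma im_le_norm_mul_add {c d : ℤ} (hcd : IsCoprime c d) {τ : ℂ} (hτ : 0 < τ.im)
    (hτ1 : τ.im ≤ 1) : τ.im ≤ ‖c * τ + d‖ := by
  rcases eq_or_ne c 0 with rfl | hc
  · rcases Int.isUnit_iff.1 (isCoprime_zero_left.1 hcd) with rfl | rfl <;> simpa
  · have hc1 : (1 : ℝ) ≤ |(c : ℝ)| := by exact_mod_cast Int.one_le_abs hc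
    calc τ.im ≤ |(c : ℝ)| * τ.im := le_mul_of_one_le_left hτ.le hc1
      _ = |(c * τ + d).im| := by simp [abs_mul, abs_of_pos hτ]
      _ ≤ ‖c * τ + d‖ := Complex.abs_im_le_norm _

lemma IsWeilVector.exists_norm_le {k : ℤ} {m : ℕ} {H : ℤ → ℂ → ℂ} (hH : IsWeilVector k m H)
    (hm : 0 < m) (hk : 1 ≤ k) {a K : ℝ}
    (hK : ∀ l : ℕ, l < 2 * m → ∀ τ : ℂ, |τ.re| ≤ 1 / 2 → 1 / 2 ≤ τ.im →
      ‖H l τ‖ ≤ K * Real.exp (a * τ.im)) {τ : ℂ} (hτ : 0 < τ.im) (hτ1 : τ.im ≤ 1) :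
    ∃ c d : ℤ, IsCoprime c d ∧ ∀ l : ℕ, l < 2 * m →
      ‖H l τ‖ ≤ √(2 * m) * K * τ.im ^ (-(k - 1 / 2) : ℝ) *
        Real.exp (a * (τ.im / ‖c * τ + d‖ ^ 2)) := by
  obtain ⟨c, d, hcd, τ', him, hre, him', hinv⟩ := hH.exists_peterssonSq_eq hm hτ
  refine ⟨c, d, hcd, fun l hl => ?_⟩
  have hs : (0 : ℝ) ≤ k - 1 / 2 := by
    have : (1 : ℝ) ≤ k := by exact_mod_cast hk
    linarith
  have hK0 : 0 ≤ K := nonneg_of_mul_nonneg_left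
    ((norm_nonneg _).trans (hK l hl τ' hre him')) (Real.exp_pos _)
  have him_le : τ'.im ≤ τ.im⁻¹ := by
    rw [him, inv_eq_one_div, div_le_div_iff₀ (by
      have := hτ.trans_le (im_le_norm_mul_add hcd hτ hτ1); positivity) hτ, one_mul, ← sq]
    exact pow_le_pow_left₀ hτ.le (im_le_norm_mul_add hcd hτ hτ1) 2
  have hsum_le : ∑ l ∈ Finset.range (2 * m), ‖H l τ'‖ ^ 2 ≤
      2 * m * (K * Real.exp (a * τ'.im)) ^ 2 := by
    refine (Finset.sum_le_card_nsmul _ _ _ fun l hl => pow_le_pow_left₀ (norm_nonneg _)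
      (hK l (Finset.mem_range.1 hl) τ' hre him') 2).trans_eq ?_
    simp
  rw [← him]
  refine le_of_sq_le_sq ?_ (by positivity)
  calc ‖H l τ‖ ^ 2 ≤ ∑ l ∈ Finset.range (2 * m), ‖H l τ‖ ^ 2 :=
        Finset.single_le_sum (f := fun l : ℕ => ‖H l τ‖ ^ 2) (fun _ _ => by positivity)
          (Finset.mem_range.2 hl)
    _ = τ.im ^ (-(k - 1 / 2) : ℝ) * peterssonSq k m H τ' := by
        rw [hinv, peterssonSq, ← mul_assoc, ← Real.rpow_add hτ, neg_add_cancel, Real.rpow_zero,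
          one_mul]
    _ ≤ τ.im ^ (-(k - 1 / 2) : ℝ) * (τ.im⁻¹ ^ (k - 1 / 2 : ℝ) *
          (2 * m * (K * Real.exp (a * τ'.im)) ^ 2)) := by
        rw [peterssonSq]
        gcongr
    _ = (√(2 * m) * K * τ.im ^ (-(k - 1 / 2) : ℝ) * Real.exp (a * τ'.im)) ^ 2 := by
        rw [Real.inv_rpow hτ.le, ← Real.rpow_neg hτ.le, mul_pow, mul_pow, mul_pow, mul_pow,
          Real.sq_sqrt (by positivity)]
        ring

end Petersson

section HolomorphicFunctions

lemma differentiableAt_integral_of_norm_le {α E : Type*} [MeasurableSpace α] {μ : Measure α}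
    [NormedAddCommGroup E] [NormedSpace ℂ E] {F : ℂ → α → E} {bound : α → ℝ} {z₀ : ℂ} {r : ℝ}
    (hr : 0 < r) (hmeas : ∀ z ∈ Metric.ball z₀ r, AEStronglyMeasurable (F z) μ)
    (hdiff : ∀ᵐ a ∂μ, DifferentiableOn ℂ (F · a) (Metric.ball z₀ r))
    (hle : ∀ᵐ a ∂μ, ∀ z ∈ Metric.ball z₀ r, ‖F z a‖ ≤ bound a) (hbound : Integrable bound μ) :
    DifferentiableAt ℂ (fun z => ∫ a, F z a ∂μ) z₀ := by
  have hz₀ : z₀ ∈ Metric.ball z₀ r := Metric.mem_ball_self hr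
  have hsub {z : ℂ} (hz : z ∈ Metric.ball z₀ (r / 2)) :
      Metric.closedBall z (r / 2) ⊆ Metric.ball z₀ r := fun w hw => by
    rw [Metric.mem_ball] at hz ⊢
    linarith [Metric.mem_closedBall.1 hw, dist_triangle w z z₀]
  have hderiv_meas : AEStronglyMeasurable (fun a => deriv (F · a) z₀) μ := by
    let z (n : ℕ) : ℂ := z₀ + (r / (n + 2) : ℝ)
    have hz_mem (n : ℕ) : z n ∈ Metric.ball z₀ r := by
      rw [Metric.mem_ball, dist_eq_norm, add_sub_cancel_left, Complex.norm_real,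
        Real.norm_of_nonneg (by positivity)]
      exact div_lt_self hr (by linarith [n.cast_nonneg (α := ℝ)])
    have hz : Tendsto z atTop (𝓝[≠] z₀) := by
      refine tendsto_nhdsWithin_iff.2 ⟨?_, Eventually.of_forall fun n => ?_⟩
      · have hlim : Tendsto (fun n : ℕ => r / (n + 2)) atTop (𝓝 0) :=
          tendsto_const_nhds.div_atTop
            (tendsto_atTop_add_const_right _ _ tendsto_natCast_atTop_atTop)
        simpa [z] using ((Complex.continuous_ofReal.tendsto _).comp hlim).const_add z₀
      · have hstep : (0 : ℝ) < r / (n + 2) := by positivity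
        simpa only [z, Set.mem_compl_iff, Set.mem_singleton_iff, add_eq_left,
          Complex.ofReal_eq_zero] using hstep.ne'
    refine aestronglyMeasurable_of_tendsto_ae atTop
      (f := fun n a => slope (F · a) z₀ (z n)) (fun n => ?_) ?_
    · exact ((hmeas _ (hz_mem n)).sub (hmeas z₀ hz₀)).const_smul _
    · filter_upwards [hdiff] with a ha
      exact (ha.differentiableAt (Metric.ball_mem_nhds z₀ hr)).hasDerivAt.tendsto_slope.comp hz
  refine (hasDerivAt_integral_of_dominated_loc_of_deriv_le
    (F' := fun z a => deriv (F · a) z) (bound := fun a => bound a / (r / 2))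
    (Metric.ball_mem_nhds z₀ (half_pos hr)) ?_ (hbound.mono' (hmeas z₀ hz₀) ?_) hderiv_meas ?_
    (hbound.div_const _) ?_).2.differentiableAt
  · filter_upwards [Metric.ball_mem_nhds z₀ hr] using hmeas
  · filter_upwards [hle] with a ha using ha z₀ hz₀
  · filter_upwards [hdiff, hle] with a ha hle z hz
    exact Complex.norm_deriv_le_of_forall_mem_sphere_norm_le (half_pos hr)
      (ha.mono (Metric.closure_ball_subset_closedBall.trans (hsub hz))).diffContOnCl
      fun w hw => hle w (hsub hz (Metric.sphere_subset_closedBall hw))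
  · filter_upwards [hdiff] with a ha z hz
    exact (ha.differentiableAt (Metric.isOpen_ball.mem_nhds
      (hsub hz (Metric.mem_closedBall_self (half_pos hr).le)))).hasDerivAt

lemma exists_norm_le_of_strip {E : Type*} [SeminormedAddCommGroup E] {g : ℂ → E}
    (hg : ∀ τ : ℂ, 0 < τ.im → ContinuousAt g τ) (hbdd : ∃ B : ℝ, ∀ τ : ℂ, 1 ≤ τ.im → ‖g τ‖ ≤ B)
    (a b : ℝ) {δ : ℝ} (hδ : 0 < δ) :
    ∃ B : ℝ, ∀ ζ : ℂ, a ≤ ζ.re → ζ.re ≤ b → δ ≤ ζ.im → ‖g ζ‖ ≤ B := by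
  obtain ⟨B, hB⟩ := hbdd
  have hcompact : IsCompact (Set.Icc a b ×ℂ Set.Icc δ 1) := isCompact_Icc.reProdIm isCompact_Icc
  obtain ⟨B', hB'⟩ := hcompact.exists_bound_of_continuousOn (f := g) fun ζ hζ =>
    (hg ζ (hδ.trans_le (Complex.mem_reProdIm.1 hζ).2.1)).continuousWithinAt
  refine ⟨max B B', fun ζ ha hb hδ => ?_⟩
  rcases le_total 1 ζ.im with h1 | h1
  · exact (hB ζ h1).trans (le_max_left _ _)
  · exact (hB' ζ (Complex.mem_reProdIm.2 ⟨⟨ha, hb⟩, hδ, h1⟩)).trans (le_max_right _ _)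

lemma eq_of_eq_on_horizontal_line {f g : ℂ → ℂ} (hf : ∀ ζ : ℂ, 0 < ζ.im → DifferentiableAt ℂ f ζ)
    (hg : ∀ ζ : ℂ, 0 < ζ.im → DifferentiableAt ℂ g ζ) {y : ℝ} (hy : 0 < y)
    (hfg : ∀ x : ℝ, f (x + y * I) = g (x + y * I)) {ζ : ℂ} (hζ : 0 < ζ.im) : f ζ = g ζ := by
  have hopen : IsOpen {ζ : ℂ | 0 < ζ.im} := isOpen_lt continuous_const Complex.continuous_im
  have analytic {f : ℂ → ℂ} (hf : ∀ ζ : ℂ, 0 < ζ.im → DifferentiableAt ℂ f ζ) :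
      AnalyticOnNhd ℂ f {ζ : ℂ | 0 < ζ.im} :=
    DifferentiableOn.analyticOnNhd (fun ζ hζ => (hf ζ hζ).differentiableWithinAt) hopen
  have hline : Tendsto (fun x : ℝ => (x : ℂ) + y * I) (𝓝[≠] 0) (𝓝[≠] (y * I)) := by
    refine tendsto_nhdsWithin_iff.2 ⟨?_, ?_⟩
    · have hcont : Continuous fun x : ℝ => (x : ℂ) + y * I := by fun_prop
      simpa using (hcont.tendsto 0).mono_left nhdsWithin_le_nhds
    · filter_upwards [self_mem_nhdsWithin] with x hx
      simpa using hx
  exact (analytic hf).eqOn_of_preconnected_of_frequently_eq (analytic hg)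
    (convex_halfSpace_im_gt 0).isPreconnected (z₀ := y * I) (by simpa using hy)
    (hline.frequently (Frequently.of_forall hfg)) hζ

lemma re_add_ofReal_mul_I (x y : ℝ) : (x + y * I : ℂ).re = x := by simp

lemma im_add_ofReal_mul_I (x y : ℝ) : (x + y * I : ℂ).im = y := by simp

lemma continuous_comp_horizontal_line {f : ℂ → ℂ}
    (hf : ∀ ζ : ℂ, 0 < ζ.im → ContinuousAt f ζ) {y : ℝ} (hy : 0 < y) :
    Continuous fun x : ℝ => f (x + y * I) :=
  continuous_iff_continuousAt.2 fun x =>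
    ContinuousAt.comp (f := fun x : ℝ => (x : ℂ) + y * I) (hf _ (by simpa)) (by fun_prop)

lemma integral_horizontal_line_eq_of_periodic {R : ℂ → ℂ}
    (hR : ∀ ζ : ℂ, 0 < ζ.im → DifferentiableAt ℂ R ζ)
    (hper : ∀ ζ : ℂ, 0 < ζ.im → R (ζ + 1) = R ζ) {y u : ℝ} (hy : 0 < y) (hu : 0 < u) :
    ∫ x in (-(1 / 2) : ℝ)..(1 / 2), R (x + y * I) =
      ∫ x in (-(1 / 2) : ℝ)..(1 / 2), R (x + u * I) := by
  have hpos {t : ℝ} (ht : t ∈ Set.uIcc y u) : 0 < t := (lt_min hy hu).trans_le ht.1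
  have hrect := Complex.integral_boundary_rect_eq_zero_of_differentiableOn R
    (((-(1 / 2) : ℝ) : ℂ) + y * I) (((1 / 2 : ℝ) : ℂ) + u * I) fun ζ hζ => by
      have him := (Complex.mem_reProdIm.1 hζ).2
      rw [im_add_ofReal_mul_I, im_add_ofReal_mul_I] at him
      exact (hR ζ (hpos him)).differentiableWithinAt
  rw [re_add_ofReal_mul_I, re_add_ofReal_mul_I, im_add_ofReal_mul_I, im_add_ofReal_mul_I] at hrect
  have hsides : ∫ t in y..u, R (((1 / 2 : ℝ) : ℂ) + t * I) =
      ∫ t in y..u, R (((-(1 / 2) : ℝ) : ℂ) + t * I) := by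
    refine intervalIntegral.integral_congr fun t ht => ?_
    rw [← hper (((-(1 / 2) : ℝ) : ℂ) + t * I) (by rw [im_add_ofReal_mul_I]; exact hpos ht)]
    congr 1
    push_cast
    ring
  rw [hsides, add_sub_cancel_right] at hrect
  exact sub_eq_zero.1 hrect

lemma integral_horizontal_line_eq_zero {R : ℂ → ℂ} {b : ℝ → ℝ}
    (hR : ∀ ζ : ℂ, 0 < ζ.im → DifferentiableAt ℂ R ζ)
    (hper : ∀ ζ : ℂ, 0 < ζ.im → R (ζ + 1) = R ζ)
    (hle : ∀ ζ : ℂ, 1 ≤ ζ.im → ‖R ζ‖ ≤ b ζ.im) (hb : Tendsto b atTop (𝓝 0)) {y : ℝ} (hy : 0 < y) :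
    ∫ x in (-(1 / 2) : ℝ)..(1 / 2), R (x + y * I) = 0 := by
  refine norm_le_zero_iff.1 (ge_of_tendsto hb ?_)
  filter_upwards [eventually_ge_atTop 1] with u hu
  rw [integral_horizontal_line_eq_of_periodic hR hper hy (one_pos.trans_le hu)]
  refine (intervalIntegral.norm_integral_le_of_norm_le_const (C := b u) fun x _ => ?_).trans_eq ?_
  · simpa using hle (x + u * I) (by simpa using hu)
  · norm_num

end HolomorphicFunctions

section QSeries

lemma exists_norm_le_of_hasSum_mul_ee {ι : Type*} {c : ι → ℂ} {x : ι → ℝ} {F : ℂ → ℂ}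
    (hx : ∀ i, c i ≠ 0 → 0 ≤ x i)
    (hF : ∀ τ : ℂ, 0 < τ.im → HasSum (fun i => c i * ee (x i * τ)) (F τ)) {δ : ℝ} (hδ : 0 < δ) :
    ∃ K : ℝ, ∀ τ : ℂ, δ ≤ τ.im → ‖F τ‖ ≤ K := by
  refine ⟨_, fun τ hτ => (hF τ (hδ.trans_le hτ)).norm_le_of_bounded
    (hF (δ * I) (by simpa)).summable.norm.hasSum fun i => ?_⟩
  rcases eq_or_ne (c i) 0 with hc | hc
  · simp [hc]
  · rw [norm_mul, norm_mul, norm_ee, norm_ee, Complex.im_ofReal_mul, Complex.im_ofReal_mul]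
    have := hx i hc
    have : (δ * I).im ≤ τ.im := by simpa
    gcongr

variable {c : ℤ → ℂ} {α : ℝ} {F : ℂ → ℂ}

lemma exists_norm_sub_sum_le_of_hasSum_mul_ee (s : Finset ℤ)
    (hs : ∀ n ∉ s, c n ≠ 0 → 0 ≤ n + α)
    (hF : ∀ τ : ℂ, 0 < τ.im → HasSum (fun n : ℤ => c n * ee ((n + α : ℝ) * τ)) (F τ))
    {δ : ℝ} (hδ : 0 < δ) :
    ∃ K : ℝ, ∀ τ : ℂ, δ ≤ τ.im → ‖F τ - ∑ n ∈ s, c n * ee ((n + α : ℝ) * τ)‖ ≤ K := by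
  refine exists_norm_le_of_hasSum_mul_ee (c := fun n => if n ∈ s then 0 else c n)
    (x := fun n : ℤ => n + α) (fun n hn => ?_) (fun τ hτ => ?_) hδ
  · rw [ne_eq, ite_eq_left_iff, not_forall] at hn
    exact hs n hn.1 hn.2
  · have hfinite : HasSum (fun n => if n ∈ s then c n * ee ((n + α : ℝ) * τ) else 0)
        (∑ n ∈ s, c n * ee ((n + α : ℝ) * τ)) := by
      rw [← Finset.sum_congr rfl fun n (hn : n ∈ s) => if_pos hn]
      exact hasSum_sum_of_ne_finset_zero fun n hn => if_neg hn
    refine ((hF τ hτ).sub hfinite).congr_fun fun n => ?_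
    split_ifs <;> simp

lemma translate_one_of_hasSum_mul_ee
    (hF : ∀ τ : ℂ, 0 < τ.im → HasSum (fun n : ℤ => c n * ee ((n + α : ℝ) * τ)) (F τ))
    {τ : ℂ} (hτ : 0 < τ.im) : F (τ + 1) = ee α * F τ := by
  have hterm (n : ℤ) : ee α * (c n * ee ((n + α : ℝ) * τ)) =
      c n * ee ((n + α : ℝ) * (τ + 1)) := by
    rw [mul_left_comm, ← ee_add, ← ee_add_intCast _ n]
    congr 2
    push_cast
    ring
  refine (hF (τ + 1) (by simpa using hτ)).unique ?_
  simpa only [hterm] using (hF τ hτ).mul_left (ee α)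

lemma integral_mul_ee_neg_of_hasSum_mul_ee
    (hF : ∀ τ : ℂ, 0 < τ.im → HasSum (fun n : ℤ => c n * ee ((n + α : ℝ) * τ)) (F τ))
    {y : ℝ} (hy : 0 < y) (j : ℤ) :
    ∫ x in (-(1 / 2) : ℝ)..(1 / 2), F (x + y * I) * ee (-((j + α : ℝ) * (x + y * I))) = c j := by
  have hline (x : ℝ) : HasSum (fun n : ℤ => c n * ee ((n - j : ℤ) * (y * I)) * ee ((n - j : ℤ) * x))
      (F (x + y * I) * ee (-((j + α : ℝ) * (x + y * I)))) := by
    refine ((hF (x + y * I) (by simpa)).mul_right _).congr_fun fun n => ?_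
    rw [mul_assoc, mul_assoc, ← ee_add, ← ee_add]
    congr 2
    push_cast
    ring
  have hsummable : Summable fun n : ℤ => c n * ee ((n - j : ℤ) * (y * I)) := by
    simpa using (hline 0).summable
  rw [integral_eq_tsum_of_hasSum_mul_ee hsummable hline, tsum_eq_single j fun n hn =>
    if_neg (sub_ne_zero.2 hn)]
  simp

end QSeries

section EichlerIntegral

/-- The kernel `(z + τ)^{-3/2}` of the nonholomorphic Eichler integral at `z = -conj τ + it`, which
depends on `τ` only through `y = Im τ`. -/
def eichKernel (y t : ℝ) : ℂ := (I * (2 * y + t)) ^ (-(3 : ℂ) / 2)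

/-- The function of `ζ` obtained from the conjugate of the Eichler integral of `g` by fixing the
height `y` in its kernel. Unlike `eich g`, it is holomorphic. -/
def eichAtHeight (g : ℂ → ℂ) (y : ℝ) (ζ : ℂ) : ℂ :=
  ∫ t in Set.Ioi (0 : ℝ), (starRingEnd ℂ) (eichKernel y t) * g (ζ + I * t)

lemma norm_eichKernel {y t : ℝ} (h : 0 < 2 * y + t) :
    ‖eichKernel y t‖ = (2 * y + t) ^ (-(3 : ℝ) / 2) := by
  have hbase : ‖I * (2 * y + t)‖ = 2 * y + t := by
    rw [norm_mul, Complex.norm_I, one_mul, ← Complex.norm_of_nonneg h.le]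
    push_cast
    rfl
  rw [eichKernel, show -(3 : ℂ) / 2 = ((-(3 : ℝ) / 2 : ℝ) : ℂ) by push_cast; rfl,
    Complex.norm_cpow_real, hbase]

lemma integrableOn_two_mul_add_rpow {y : ℝ} (hy : 0 < y) :
    IntegrableOn (fun t : ℝ => (2 * y + t) ^ (-(3 : ℝ) / 2)) (Set.Ioi 0) := by
  simpa [add_comm] using integrableOn_add_rpow_Ioi_of_lt (a := -(3 : ℝ) / 2) (m := 2 * y) (c := 0)
    (by norm_num) (by linarith)

lemma eich_eq_conj_eichAtHeight (g : ℂ → ℂ) (τ : ℂ) :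
    eich g τ = (I / (2 * (Real.pi : ℂ))) ^ ((1 : ℂ) / 2) * I *
      (starRingEnd ℂ) (eichAtHeight g τ.im τ) := by
  rw [eich, eichAtHeight, ← integral_conj, mul_assoc, ← integral_const_mul I]
  congr 1
  refine integral_congr_ae (Eventually.of_forall fun t => ?_)
  have hbase : -(starRingEnd ℂ) τ + I * t + τ = I * (2 * τ.im + t) := by
    have := Complex.sub_conj τ
    push_cast at this
    linear_combination this
  simp only [map_mul, Complex.conj_conj, eichKernel, hbase]
  ring

lemma norm_eichAtHeight_le {g : ℂ → ℂ} {y₀ y B : ℝ} (hy₀ : 0 < y₀) (hy : y₀ ≤ y) {ζ : ℂ}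
    (hB : ∀ t : ℝ, 0 < t → ‖g (ζ + I * t)‖ ≤ B) :
    ‖eichAtHeight g y ζ‖ ≤ ∫ t in Set.Ioi (0 : ℝ), (2 * y₀ + t) ^ (-(3 : ℝ) / 2) * B := by
  refine norm_integral_le_of_norm_le ((integrableOn_two_mul_add_rpow hy₀).mul_const B)
    ((ae_restrict_iff' measurableSet_Ioi).2 (Eventually.of_forall fun t (ht : 0 < t) => ?_))
  rw [norm_mul, RCLike.norm_conj, norm_eichKernel (by linarith)]
  exact mul_le_mul (Real.rpow_le_rpow_of_nonpos (by linarith) (by linarith) (by norm_num)) (hB t ht)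
    (norm_nonneg _) (Real.rpow_nonneg (by linarith) _)

variable {g : ℂ → ℂ}

lemma norm_eich_le {δ B : ℝ} (hδ : 0 < δ) {τ : ℂ} (hτ : δ ≤ τ.im)
    (hB : ∀ t : ℝ, 0 < t → ‖g (τ + I * t)‖ ≤ B) :
    ‖eich g τ‖ ≤ ‖(I / (2 * (Real.pi : ℂ))) ^ ((1 : ℂ) / 2) * I‖ *
      ∫ t in Set.Ioi (0 : ℝ), (2 * δ + t) ^ (-(3 : ℝ) / 2) * B := by
  rw [eich_eq_conj_eichAtHeight, norm_mul, RCLike.norm_conj]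
  exact mul_le_mul_of_nonneg_left (norm_eichAtHeight_le hδ hτ hB) (norm_nonneg _)

lemma exists_norm_eich_le_of_one_le_im (hbdd : ∃ B : ℝ, ∀ τ : ℂ, 1 ≤ τ.im → ‖g τ‖ ≤ B) :
    ∃ K : ℝ, ∀ τ : ℂ, 1 ≤ τ.im → ‖eich g τ‖ ≤ K := by
  obtain ⟨B, hB⟩ := hbdd
  exact ⟨_, fun τ hτ => norm_eich_le one_pos hτ fun t ht => hB _ (by simpa using by linarith)⟩

lemma exists_norm_eich_le (hg : ∀ τ : ℂ, 0 < τ.im → DifferentiableAt ℂ g τ)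
    (hbdd : ∃ B : ℝ, ∀ τ : ℂ, 1 ≤ τ.im → ‖g τ‖ ≤ B) (a b : ℝ) {δ : ℝ} (hδ : 0 < δ) :
    ∃ K : ℝ, ∀ τ : ℂ, a ≤ τ.re → τ.re ≤ b → δ ≤ τ.im → ‖eich g τ‖ ≤ K := by
  obtain ⟨B, hB⟩ := exists_norm_le_of_strip (fun τ hτ => (hg τ hτ).continuousAt) hbdd a b hδ
  exact ⟨_, fun τ ha hb hτ => norm_eich_le hδ hτ fun t ht =>
    hB _ (by simpa) (by simpa) (by simpa using by linarith)⟩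

lemma differentiableAt_eichAtHeight (hg : ∀ τ : ℂ, 0 < τ.im → DifferentiableAt ℂ g τ)
    (hbdd : ∃ B : ℝ, ∀ τ : ℂ, 1 ≤ τ.im → ‖g τ‖ ≤ B) {y : ℝ} (hy : 0 < y) {ζ₀ : ℂ}
    (hζ₀ : 0 < ζ₀.im) : DifferentiableAt ℂ (eichAtHeight g y) ζ₀ := by
  have hr : 0 < ζ₀.im / 2 := half_pos hζ₀
  obtain ⟨B, hB⟩ := exists_norm_le_of_strip (fun τ hτ => (hg τ hτ).continuousAt) hbdd
    (ζ₀.re - ζ₀.im / 2) (ζ₀.re + ζ₀.im / 2) hr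
  have him {ζ : ℂ} (hζ : ζ ∈ Metric.ball ζ₀ (ζ₀.im / 2)) {t : ℝ} (ht : 0 < t) :
      ζ₀.im / 2 ≤ (ζ + I * t).im := by
    have := abs_le.1 ((Complex.abs_im_le_norm _).trans (mem_ball_iff_norm.1 hζ).le)
    simp only [Complex.sub_im] at this
    simpa using by linarith
  have hdiff {ζ : ℂ} (hζ : ζ ∈ Metric.ball ζ₀ (ζ₀.im / 2)) {t : ℝ} (ht : 0 < t) :
      DifferentiableAt ℂ g (ζ + I * t) := hg _ (hr.trans_le (him hζ ht))
  refine differentiableAt_integral_of_norm_le hr (fun ζ hζ => ?_)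
    ((ae_restrict_iff' measurableSet_Ioi).2 (Eventually.of_forall fun t (ht : 0 < t) ζ hζ => ?_))
    ((ae_restrict_iff' measurableSet_Ioi).2 (Eventually.of_forall fun t (ht : 0 < t) ζ hζ => ?_))
    ((integrableOn_two_mul_add_rpow hy).mul_const B)
  · refine AEStronglyMeasurable.mul (Measurable.aestronglyMeasurable ?_)
      (ContinuousOn.aestronglyMeasurable (fun t ht => ContinuousAt.continuousWithinAt ?_)
        measurableSet_Ioi)
    · unfold eichKernel
      exact Complex.continuous_conj.measurable.comp (by fun_prop)
    · exact ContinuousAt.comp (f := fun t : ℝ => ζ + I * t) (hdiff hζ ht).continuousAt (by fun_prop)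
  · refine ((DifferentiableAt.comp (f := fun ζ : ℂ => ζ + I * t) ζ (hdiff hζ ht)
      (by fun_prop)).const_mul _).differentiableWithinAt
  · have := abs_le.1 ((Complex.abs_re_le_norm _).trans (mem_ball_iff_norm.1 hζ).le)
    simp only [Complex.sub_re] at this
    rw [norm_mul, RCLike.norm_conj, norm_eichKernel (by linarith)]
    gcongr
    exact hB _ (by simpa using by linarith) (by simpa using by linarith) (him hζ ht)

lemma continuous_eich_horizontal_line (hg : ∀ τ : ℂ, 0 < τ.im → DifferentiableAt ℂ g τ)
    (hbdd : ∃ B : ℝ, ∀ τ : ℂ, 1 ≤ τ.im → ‖g τ‖ ≤ B) {y : ℝ} (hy : 0 < y) :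
    Continuous fun x : ℝ => eich g (x + y * I) := by
  simp_rw [eich_eq_conj_eichAtHeight, im_add_ofReal_mul_I]
  exact continuous_const.mul (Complex.continuous_conj.comp (continuous_comp_horizontal_line
    (fun ζ hζ => (differentiableAt_eichAtHeight hg hbdd hy hζ).continuousAt) hy))

lemma eichAtHeight_add_one_of_line (hg : ∀ τ : ℂ, 0 < τ.im → DifferentiableAt ℂ g τ)
    (hbdd : ∃ B : ℝ, ∀ τ : ℂ, 1 ≤ τ.im → ‖g τ‖ ≤ B) {ν y : ℝ} (hy : 0 < y)
    (hT : ∀ x : ℝ, eich g (x + y * I + 1) = ee ν * eich g (x + y * I)) {ζ : ℂ} (hζ : 0 < ζ.im) :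
    eichAtHeight g y (ζ + 1) = ee (-ν) * eichAtHeight g y ζ := by
  have hQ (ζ : ℂ) (hζ : 0 < ζ.im) := differentiableAt_eichAtHeight hg hbdd hy hζ
  have hconst : (I / (2 * (Real.pi : ℂ))) ^ ((1 : ℂ) / 2) * I ≠ 0 := by
    simp [Complex.cpow_eq_zero_iff, Real.pi_ne_zero]
  refine eq_of_eq_on_horizontal_line (f := fun ζ => eichAtHeight g y (ζ + 1))
    (fun ζ hζ => DifferentiableAt.comp (f := fun ζ : ℂ => ζ + 1) ζ (hQ _ (by simpa))
      (by fun_prop)) (fun ζ hζ => (hQ ζ hζ).const_mul _) hy (fun x => ?_) hζ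
  have hline := hT x
  rw [eich_eq_conj_eichAtHeight, eich_eq_conj_eichAtHeight, mul_left_comm, Complex.add_im,
    im_add_ofReal_mul_I, Complex.one_im, add_zero] at hline
  have hconj := congrArg (starRingEnd ℂ) (mul_left_cancel₀ hconst hline)
  rwa [map_mul, Complex.conj_conj, Complex.conj_conj, conj_ee, Complex.conj_ofReal] at hconj

-- On the line at height `y`, `eich g` is conjugate to a holomorphic function, so multiplying by
-- `ee (-ντ)` amounts, up to conjugation, to multiplying that function by the decaying `ee (νζ)`;
-- pushing the contour up to `i∞` then gives zero.
lemma integral_eich_mul_ee_neg_eq_zero (hg : ∀ τ : ℂ, 0 < τ.im → DifferentiableAt ℂ g τ)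
    (hbdd : ∃ B : ℝ, ∀ τ : ℂ, 1 ≤ τ.im → ‖g τ‖ ≤ B) {ν y : ℝ} (hν : 0 < ν) (hy : 0 < y)
    (hT : ∀ x : ℝ, eich g (x + y * I + 1) = ee ν * eich g (x + y * I)) :
    ∫ x in (-(1 / 2) : ℝ)..(1 / 2), eich g (x + y * I) * ee (-(ν * (x + y * I))) = 0 := by
  set κ : ℂ := (I / (2 * (Real.pi : ℂ))) ^ ((1 : ℂ) / 2) * I with hκ
  let R : ℂ → ℂ := fun ζ => eichAtHeight g y ζ * ee (ν * ζ)
  have hR_diff (ζ : ℂ) (hζ : 0 < ζ.im) : DifferentiableAt ℂ R ζ :=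
    (differentiableAt_eichAtHeight hg hbdd hy hζ).mul
      (differentiable_ee.comp (differentiable_id.const_mul _) ζ)
  have hR_per (ζ : ℂ) (hζ : 0 < ζ.im) : R (ζ + 1) = R ζ := by
    simp only [R]
    rw [eichAtHeight_add_one_of_line hg hbdd hy hT hζ, mul_add, mul_one, ee_add, ee_neg]
    field_simp [ee_ne_zero]
  have hline (x : ℝ) : eich g (x + y * I) * ee (-(ν * (x + y * I))) =
      κ * ee (-(ν * (2 * y * I))) * (starRingEnd ℂ) (R (x + y * I)) := by
    have hphase : -(ν * (x + y * I)) =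
        -(ν * (2 * y * I)) + -(starRingEnd ℂ) (ν * (x + y * I)) := by
      simp only [map_mul, map_add, Complex.conj_ofReal, Complex.conj_I]
      ring
    rw [eich_eq_conj_eichAtHeight, im_add_ofReal_mul_I, map_mul, conj_ee, hphase, ee_add, ← hκ]
    ring
  obtain ⟨B, hB⟩ := hbdd
  have hR_zero : ∫ x in (-(1 / 2) : ℝ)..(1 / 2), R (x + y * I) = 0 := by
    refine integral_horizontal_line_eq_zero hR_diff hR_per (b := fun u =>
      (∫ t in Set.Ioi (0 : ℝ), (2 * y + t) ^ (-(3 : ℝ) / 2) * B) *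
        Real.exp (-(2 * Real.pi * ν * u)))
      (fun ζ hζ => ?_) ?_ hy
    · have hQ : ‖eichAtHeight g y ζ‖ ≤ _ := norm_eichAtHeight_le hy le_rfl fun t ht =>
        hB (ζ + I * t) (by simpa using by linarith)
      rw [norm_mul, norm_ee, Complex.im_ofReal_mul, ← mul_assoc]
      gcongr
    · simpa using (Real.tendsto_exp_neg_atTop_nhds_zero.comp
        (tendsto_id.const_mul_atTop (by positivity : 0 < 2 * Real.pi * ν))).const_mul _
  simp_rw [hline]
  rw [intervalIntegral.integral_const_mul, intervalIntegral.integral_of_le (by norm_num),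
    integral_conj, ← intervalIntegral.integral_of_le (by norm_num), hR_zero, map_zero, mul_zero]

lemma integral_add_eich_mul_ee_neg {c : ℤ → ℂ} {α : ℝ} {F : ℂ → ℂ}
    (hF : ∀ τ : ℂ, 0 < τ.im → HasSum (fun n : ℤ => c n * ee ((n + α : ℝ) * τ)) (F τ))
    (hFcont : ∀ τ : ℂ, 0 < τ.im → ContinuousAt F τ)
    (hg : ∀ τ : ℂ, 0 < τ.im → DifferentiableAt ℂ g τ)
    (hbdd : ∃ B : ℝ, ∀ τ : ℂ, 1 ≤ τ.im → ‖g τ‖ ≤ B) {y : ℝ} (hy : 0 < y)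
    (hT : ∀ x : ℝ, F (x + y * I + 1) + eich g (x + y * I + 1) =
      ee α * (F (x + y * I) + eich g (x + y * I))) {j : ℤ} (hj : 0 < j + α) :
    ∫ x in (-(1 / 2) : ℝ)..(1 / 2),
      (F (x + y * I) + eich g (x + y * I)) * ee (-((j + α : ℝ) * (x + y * I))) = c j := by
  have hTeich (x : ℝ) : eich g (x + y * I + 1) = ee (j + α : ℝ) * eich g (x + y * I) := by
    have hTF := translate_one_of_hasSum_mul_ee hF (τ := x + y * I) (by simpa)
    have hphase : ee (j + α : ℝ) = ee α := by
      rw [← ee_add_intCast α j]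
      push_cast
      rw [add_comm]
    rw [hphase]
    linear_combination hT x - hTF
  have hphase_cont : Continuous fun x : ℝ => ee (-((j + α : ℝ) * (x + y * I))) := by fun_prop
  have hF_cont := (continuous_comp_horizontal_line hFcont hy).fun_mul hphase_cont
  have heich_cont := (continuous_eich_horizontal_line hg hbdd hy).fun_mul hphase_cont
  simp_rw [add_mul]
  rw [intervalIntegral.integral_add (hF_cont.intervalIntegrable _ _)
      (heich_cont.intervalIntegrable _ _),
    integral_mul_ee_neg_of_hasSum_mul_ee hF hy,
    integral_eich_mul_ee_neg_eq_zero hg hbdd hj hy hTeich, add_zero]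

end EichlerIntegral

section GaussianMoment

lemma integrable_mul_cexp_quadratic {s : ℂ} (hs : 0 < s.re) (c : ℂ) :
    Integrable fun u : ℝ => (u : ℂ) * cexp (-s * u ^ 2 + c * u) := by
  have hplus := (integrable_cexp_quadratic hs (c + 1) 0).norm
  have hminus := (integrable_cexp_quadratic hs (c - 1) 0).norm
  have hcont : Continuous fun u : ℝ => (u : ℂ) * cexp (-s * u ^ 2 + c * u) := by fun_prop
  refine (hplus.add hminus).mono' hcont.aestronglyMeasurable (Eventually.of_forall fun u => ?_)
  have hsplit (v w : ℝ) (hw : w = v * u) :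
      ‖cexp (-s * u ^ 2 + (c + v) * u + 0)‖ = ‖cexp (-s * u ^ 2 + c * u)‖ * Real.exp w := by
    rw [show -s * u ^ 2 + (c + v) * u + 0 = (-s * u ^ 2 + c * u) + (w : ℂ) by
        rw [hw]; push_cast; ring,
      Complex.exp_add, norm_mul, Complex.norm_exp_ofReal]
  have hu : |u| ≤ Real.exp u + Real.exp (-u) :=
    abs_le.2 ⟨by linarith [Real.add_one_le_exp (-u), Real.exp_pos u],
      by linarith [Real.add_one_le_exp u, Real.exp_pos (-u)]⟩
  have h₁ := hsplit 1 u (by ring)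
  have h₂ := hsplit (-1) (-u) (by ring)
  push_cast at h₁ h₂
  rw [← sub_eq_add_neg] at h₂
  rw [Pi.add_apply, h₁, h₂, norm_mul, Complex.norm_real, Real.norm_eq_abs, ← mul_add, mul_comm]
  exact mul_le_mul_of_nonneg_left hu (norm_nonneg _)

lemma integral_mul_cexp_quadratic {s : ℂ} (hs : 0 < s.re) (c : ℂ) :
    ∫ u : ℝ, (u : ℂ) * cexp (-s * u ^ 2 + c * u) =
      c / (2 * s) * ((Real.pi / s) ^ ((1 : ℂ) / 2) * cexp (c ^ 2 / (4 * s))) := by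
  have hs0 : s ≠ 0 := by
    rintro rfl
    simp at hs
  have hmoment := integrable_mul_cexp_quadratic hs c
  have hgauss : Integrable fun u : ℝ => cexp (-s * u ^ 2 + c * u) := by
    simpa using integrable_cexp_quadratic hs c 0
  have hgauss_integral : ∫ u : ℝ, cexp (-s * u ^ 2 + c * u) =
      (Real.pi / s) ^ ((1 : ℂ) / 2) * cexp (c ^ 2 / (4 * s)) := by
    have := integral_cexp_quadratic (b := -s) (by simpa using hs) c 0
    simp only [add_zero, neg_neg, zero_sub] at this
    rw [this]
    congr 2
    field_simp
  have hderiv (u : ℝ) : HasDerivAt (fun u : ℝ => cexp (-s * u ^ 2 + c * u))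
      (-(2 * s) * (u * cexp (-s * u ^ 2 + c * u)) + c * cexp (-s * u ^ 2 + c * u)) u := by
    have hexponent : HasDerivAt (fun z : ℂ => -s * z ^ 2 + c * z) (-s * (2 * u) + c) u := by
      simpa using ((hasDerivAt_pow 2 (u : ℂ)).const_mul (-s)).fun_add
        ((hasDerivAt_id' (u : ℂ)).const_mul c)
    convert hexponent.cexp.comp_ofReal using 1
    ring
  have hzero := integral_eq_zero_of_hasDerivAt_of_integrable hderiv
    ((hmoment.const_mul _).add (hgauss.const_mul _)) hgauss
  rw [integral_add (hmoment.const_mul _) (hgauss.const_mul _), integral_const_mul,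
    integral_const_mul, hgauss_integral] at hzero
  rw [div_mul_eq_mul_div, eq_div_iff (mul_ne_zero two_ne_zero hs0)]
  linear_combination -hzero

end GaussianMoment

section BesselKernel

/-- The kernel `s^{-3/2}·e^{a/s}` on the right half plane. With `s = -iτ` it is the image of a polar
term `q^{-1/4m}` under `τ ↦ -1/τ` in weight `3/2`, and up to a factor it is the Laplace transform of
the Bessel function of half-integral order `sinh (2√(at))`. -/
def besselKernel (a : ℝ) (s : ℂ) : ℂ := cexp (a / s) / (s * s ^ ((1 : ℂ) / 2))

lemma ofReal_div_cpow_half {ρ : ℝ} (hρ : 0 < ρ) {s : ℂ} (hs : 0 < s.re) :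
    ((ρ : ℂ) / s) ^ ((1 : ℂ) / 2) = √ρ / s ^ ((1 : ℂ) / 2) := by
  have hs0 : s ≠ 0 := by
    rintro rfl
    simp at hs
  have harg : s.arg ≠ Real.pi := fun h => by linarith [(Complex.arg_eq_pi_iff.1 h).1]
  have hsqrt : (√ρ : ℂ) = (ρ : ℂ) ^ ((1 : ℂ) / 2) := by
    rw [Real.sqrt_eq_rpow, Complex.ofReal_cpow hρ.le]
    norm_num
  have hρ0 : (ρ : ℂ) ≠ 0 := by exact_mod_cast hρ.ne'
  rw [hsqrt, div_eq_mul_inv, div_eq_mul_inv (_ ^ _), ← Complex.inv_cpow _ _ harg,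
    Complex.cpow_def_of_ne_zero (mul_ne_zero hρ0 (inv_ne_zero hs0)),
    Complex.cpow_def_of_ne_zero hρ0, Complex.cpow_def_of_ne_zero (inv_ne_zero hs0),
    ← Complex.exp_add, Complex.log_ofReal_mul hρ (inv_ne_zero hs0), Complex.ofReal_log hρ.le]
  congr 1
  ring

/-- The `t`-integral becomes a Gaussian moment under `t = u²`. -/
lemma integral_sinh_mul_cexp_neg {a : ℝ} (ha : 0 ≤ a) {s : ℂ} (hs : 0 < s.re) :
    ∫ t in Set.Ioi (0 : ℝ), (Real.sinh (2 * √(a * t)) : ℂ) * cexp (-(s * t)) =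
      √(Real.pi * a) * besselKernel a s := by
  have hs0 : s ≠ 0 := by
    rintro rfl
    simp at hs
  set c : ℝ := 2 * √a with hc
  let f : ℝ → ℂ := fun u => u * cexp (-s * u ^ 2 + c * u)
  have hf : Integrable f := integrable_mul_cexp_quadratic hs c
  have hsubst : Set.EqOn (fun u : ℝ => ((2 : ℝ) * u ^ ((2 : ℝ) - 1)) •
      ((Real.sinh (2 * √(a * u ^ (2 : ℝ))) : ℂ) * cexp (-(s * (u ^ (2 : ℝ) : ℝ)))))
      (fun u => f u + f (-u)) (Set.Ioi 0) := fun u (hu : 0 < u) => by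
    have hpos : f u = u * (cexp (c * u) * cexp (-(s * u ^ 2))) := by
      simp only [f]
      rw [← Complex.exp_add]
      ring_nf
    have hneg : f (-u) = -u * (cexp (-(c * u)) * cexp (-(s * u ^ 2))) := by
      simp only [f]
      rw [← Complex.exp_add]
      push_cast
      ring_nf
    have hsinh : (Real.sinh (2 * √(a * u ^ (2 : ℝ))) : ℂ) =
        (cexp (c * u) - cexp (-(c * u))) / 2 := by
      rw [Real.rpow_two, Real.sqrt_mul ha, Real.sqrt_sq hu.le, ← mul_assoc, ← hc,
        Complex.ofReal_sinh, Complex.sinh, Complex.ofReal_mul]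
    simp only [hpos, hneg, hsinh]
    rw [show (2 : ℝ) - 1 = 1 by norm_num, Real.rpow_one, Real.rpow_two, Complex.real_smul]
    push_cast
    ring
  have hcsq : (c : ℂ) ^ 2 / (4 * s) = a / s := by
    rw [← Complex.ofReal_pow, hc, mul_pow, Real.sq_sqrt ha]
    push_cast
    field_simp
    ring
  rw [← integral_comp_rpow_Ioi_of_pos two_pos, setIntegral_congr_fun measurableSet_Ioi hsubst,
    integral_add hf.integrableOn hf.comp_neg.integrableOn, integral_comp_neg_Ioi 0 f, neg_zero,
    add_comm, intervalIntegral.integral_Iic_add_Ioi hf.integrableOn hf.integrableOn,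
    integral_mul_cexp_quadratic hs, hcsq, ofReal_div_cpow_half Real.pi_pos hs, besselKernel,
    Real.sqrt_mul Real.pi_pos.le, hc]
  push_cast
  field_simp

lemma norm_besselKernel (a : ℝ) {s : ℂ} (hs : 0 < s.re) :
    ‖besselKernel a s‖ = Real.exp (a * (s.re / ‖s‖ ^ 2)) * ‖s‖ ^ (-(3 / 2) : ℝ) := by
  have hn : 0 < ‖s‖ := hs.trans_le ((le_abs_self _).trans (Complex.abs_re_le_norm s))
  have hre : ((a : ℂ) / s).re = a * (s.re / ‖s‖ ^ 2) := by
    rw [Complex.div_re, Complex.normSq_eq_norm_sq, Complex.ofReal_re, Complex.ofReal_im]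
    ring
  rw [besselKernel, norm_div, Complex.norm_exp, norm_mul, hre,
    show (1 : ℂ) / 2 = ((1 / 2 : ℝ) : ℂ) by push_cast; rfl, Complex.norm_cpow_real, div_eq_mul_inv,
    show (-(3 / 2) : ℝ) = -(1 + 1 / 2) by norm_num, Real.rpow_neg hn.le, Real.rpow_add hn,
    Real.rpow_one]

variable {a y : ℝ}

lemma continuous_besselKernel_vertical_line (hy : 0 < y) :
    Continuous fun x : ℝ => besselKernel a (y - I * x) := by
  have hslit (x : ℝ) : (y : ℂ) - I * x ∈ Complex.slitPlane := Or.inl (by simpa using hy)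
  have hne (x : ℝ) := Complex.slitPlane_ne_zero (hslit x)
  unfold besselKernel
  refine Continuous.div ?_ ?_ fun x => ?_
  · exact Complex.continuous_exp.comp (continuous_const.div (by fun_prop) hne)
  · exact Continuous.mul (by fun_prop) (Continuous.cpow (by fun_prop) continuous_const hslit)
  · simp [hne x]

lemma norm_besselKernel_vertical_line_le (ha : 0 ≤ a) (hy : 0 < y) {b κ x : ℝ} (hκ : 0 < κ)
    (hexp : y ≤ b * ‖(y : ℂ) - I * x‖ ^ 2) (hnorm : κ * (1 + ‖x‖) ≤ ‖(y : ℂ) - I * x‖) :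
    ‖besselKernel a (y - I * x)‖ ≤
      Real.exp (a * b) * κ ^ (-(3 / 2) : ℝ) * (1 + ‖x‖) ^ (-(3 / 2) : ℝ) := by
  have hre : ((y : ℂ) - I * x).re = y := by simp
  have hpos : 0 < κ * (1 + ‖x‖) := by positivity
  rw [norm_besselKernel a (by rwa [hre]), hre, mul_assoc, ← Real.mul_rpow hκ.le (by positivity)]
  gcongr ?_ * ?_
  · have hdiv : y / ‖(y : ℂ) - I * x‖ ^ 2 ≤ b :=
      (div_le_iff₀ (pow_pos (hpos.trans_le hnorm) 2)).2 hexp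
    gcongr
  · exact Real.rpow_le_rpow_of_nonpos hpos hnorm (by norm_num)

lemma abs_le_norm_ofReal_sub_I_mul (y x : ℝ) : |x| ≤ ‖(y : ℂ) - I * x‖ := by
  simpa using Complex.abs_im_le_norm ((y : ℂ) - I * x)

lemma integrable_one_add_norm_rpow_neg_three_halves :
    Integrable fun x : ℝ => (1 + ‖x‖) ^ (-(3 / 2) : ℝ) :=
  integrable_one_add_norm (by norm_num [Module.finrank_self])

lemma integrable_besselKernel_vertical_line (ha : 0 ≤ a) (hy : 0 < y) :
    Integrable fun x : ℝ => besselKernel a (y - I * x) := by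
  refine (integrable_one_add_norm_rpow_neg_three_halves.const_mul
      (Real.exp (a * (1 / y)) * (y / (y + 1)) ^ (-(3 / 2) : ℝ))).mono'
    (continuous_besselKernel_vertical_line hy).aestronglyMeasurable
    (Eventually.of_forall fun x => ?_)
  have hx := abs_le_norm_ofReal_sub_I_mul y x
  have hyle : y ≤ ‖(y : ℂ) - I * x‖ := by
    simpa using (le_abs_self _).trans (Complex.abs_re_le_norm ((y : ℂ) - I * x))
  refine norm_besselKernel_vertical_line_le ha hy (by positivity) ?_ ?_
  · rw [one_div_mul_eq_div, le_div_iff₀ hy]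
    nlinarith
  · rw [div_mul_eq_mul_div, div_le_iff₀ (by positivity), Real.norm_eq_abs]
    nlinarith

lemma norm_cexp_ofReal_sub_I_mul_mul (y x t : ℝ) :
    ‖cexp (((y : ℂ) - I * x) * t)‖ = Real.exp (y * t) := by
  rw [Complex.norm_exp]
  simp

lemma integrable_besselKernel_mul_cexp (ha : 0 ≤ a) (hy : 0 < y) (t : ℝ) :
    Integrable fun x : ℝ => besselKernel a (y - I * x) * cexp ((y - I * x) * t) :=
  (integrable_besselKernel_vertical_line ha hy).mul_bdd (c := Real.exp (y * t))
    (by fun_prop : Continuous fun x : ℝ => cexp (((y : ℂ) - I * x) * t)).aestronglyMeasurable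
    (Eventually.of_forall fun x => (norm_cexp_ofReal_sub_I_mul_mul y x t).le)

/-- The function `u ↦ sinh (2√(au))·e^{-yu}`, whose Fourier transform is `besselKernel a` on the
line `re s = y`. It vanishes for `u ≤ 0` because `√` of a nonpositive real is `0`. -/
def dampedSinh (a y u : ℝ) : ℂ := (Real.sinh (2 * √(a * u)) * Real.exp (-(y * u)) : ℝ)

lemma continuous_dampedSinh (a y : ℝ) : Continuous (dampedSinh a y) :=
  Complex.continuous_ofReal.comp
    ((Real.continuous_sinh.comp (by fun_prop)).mul (by fun_prop))

lemma dampedSinh_of_nonpos (ha : 0 ≤ a) (y : ℝ) {u : ℝ} (hu : u ≤ 0) : dampedSinh a y u = 0 := by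
  simp [dampedSinh, Real.sqrt_eq_zero_of_nonpos (mul_nonpos_of_nonneg_of_nonpos ha hu)]

lemma norm_dampedSinh_le (ha : 0 ≤ a) (hy : 0 < y) {u : ℝ} (hu : 0 ≤ u) :
    ‖dampedSinh a y u‖ ≤ Real.exp (2 * a / y) * Real.exp (-(y / 2) * u) := by
  have hsqrt_nonneg : 0 ≤ 2 * √(a * u) := by positivity
  have hsinh : Real.sinh (2 * √(a * u)) ≤ Real.exp (2 * √(a * u)) := by
    rw [Real.sinh_eq]
    linarith [Real.exp_pos (2 * √(a * u)), Real.exp_pos (-(2 * √(a * u)))]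
  have hsqrt : √(a * u) ≤ a / y + y * u / 4 := by
    refine Real.sqrt_le_iff.2 ⟨by positivity, ?_⟩
    have hsq : (a / y + y * u / 4) ^ 2 = a * u + (a / y - y * u / 4) ^ 2 := by
      field_simp
      ring
    rw [hsq]
    exact le_add_of_nonneg_right (sq_nonneg _)
  calc ‖dampedSinh a y u‖ = Real.sinh (2 * √(a * u)) * Real.exp (-(y * u)) := by
        rw [dampedSinh, Complex.norm_real, Real.norm_of_nonneg
          (mul_nonneg (Real.sinh_nonneg_iff.2 hsqrt_nonneg) (Real.exp_pos _).le)]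
    _ ≤ Real.exp (2 * √(a * u)) * Real.exp (-(y * u)) := by gcongr
    _ = Real.exp (2 * √(a * u) - y * u) := by rw [← Real.exp_add, sub_eq_add_neg]
    _ ≤ Real.exp (2 * (a / y + y * u / 4) - y * u) := by gcongr
    _ = Real.exp (2 * a / y) * Real.exp (-(y / 2) * u) := by
        rw [← Real.exp_add]
        ring_nf

lemma integrable_dampedSinh (ha : 0 ≤ a) (hy : 0 < y) : Integrable (dampedSinh a y) := by
  have hon : IntegrableOn (dampedSinh a y) (Set.Ioi 0) :=
    ((exp_neg_integrableOn_Ioi 0 (half_pos hy)).const_mul (Real.exp (2 * a / y))).mono'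
      (continuous_dampedSinh a y).aestronglyMeasurable
      ((ae_restrict_iff' measurableSet_Ioi).2
        (Eventually.of_forall fun u hu => norm_dampedSinh_le ha hy (Set.mem_Ioi.1 hu).le))
  refine (integrableOn_iff_integrable_of_support_subset fun u hu => ?_).1 hon
  by_contra hle
  exact hu (dampedSinh_of_nonpos ha y (not_lt.1 hle))

lemma fourier_dampedSinh (ha : 0 ≤ a) (hy : 0 < y) (w : ℝ) :
    FourierTransform.fourier (dampedSinh a y) w =
      √(Real.pi * a) * besselKernel a (y - I * ((-(2 * Real.pi) * w : ℝ) : ℂ)) := by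
  rw [Real.fourier_real_eq_integral_exp_smul, ← integral_sinh_mul_cexp_neg ha (by simpa using hy),
    ← setIntegral_eq_integral_of_forall_compl_eq_zero (s := Set.Ioi (0 : ℝ)) fun u hu => by
      rw [dampedSinh_of_nonpos ha y (not_lt.1 hu), smul_zero]]
  refine setIntegral_congr_fun measurableSet_Ioi fun u _ => ?_
  simp only [dampedSinh, smul_eq_mul]
  rw [Complex.ofReal_mul (Real.sinh _), Complex.ofReal_exp, mul_left_comm, ← Complex.exp_add]
  congr 2
  push_cast
  ring

/-- This is Fourier inversion for `dampedSinh a y`, after the substitution `x = -2πw`. -/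
lemma integral_besselKernel_mul_cexp (ha : 0 < a) (hy : 0 < y) (t : ℝ) :
    ∫ x : ℝ, besselKernel a (y - I * x) * cexp ((y - I * x) * t) =
      2 * Real.pi * (Real.sinh (2 * √(a * t)) : ℂ) / √(Real.pi * a) := by
  have hpi := Real.pi_pos
  set f : ℝ → ℂ := fun x => besselKernel a (y - I * x) * cexp ((y - I * x) * t) with hf
  have hfourier := funext (fourier_dampedSinh ha.le hy)
  have hfourier_int : Integrable (FourierTransform.fourier (dampedSinh a y)) := by
    rw [hfourier]
    exact ((integrable_besselKernel_vertical_line ha.le hy).comp_mul_left'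
      (R := -(2 * Real.pi)) (by linarith)).const_mul _
  have hinv := congrFun ((continuous_dampedSinh a y).fourierInv_fourier_eq
    (integrable_dampedSinh ha.le hy) hfourier_int) t
  have hintegrand (w : ℝ) : cexp ((2 * Real.pi * inner ℝ w t : ℝ) * I) •
      (√(Real.pi * a) * besselKernel a (y - I * ((-(2 * Real.pi) * w : ℝ) : ℂ))) =
      √(Real.pi * a) * cexp (-(y * t)) * f (-(2 * Real.pi) * w) := by
    have hphase : cexp ((2 * Real.pi * inner ℝ w t : ℝ) * I) =
        cexp (-(y * t)) * cexp ((y - I * ((-(2 * Real.pi) * w : ℝ) : ℂ)) * t) := by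
      rw [← Complex.exp_add]
      congr 1
      simp only [RCLike.inner_apply, Real.ringHom_apply, ofReal_mul, ofReal_ofNat, neg_mul,
        ofReal_neg, mul_neg, sub_neg_eq_add]
      ring
    rw [smul_eq_mul, hphase, hf]
    ring
  rw [Real.fourierInv_eq', hfourier] at hinv
  simp_rw [hintegrand] at hinv
  rw [integral_const_mul, Measure.integral_comp_mul_left f, abs_inv, abs_neg,
    abs_of_pos (by positivity : 0 < 2 * Real.pi), Complex.real_smul, dampedSinh,
    Complex.ofReal_mul, Complex.ofReal_exp] at hinv
  have hsqrt : (√(Real.pi * a) : ℂ) ≠ 0 := by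
    exact_mod_cast (Real.sqrt_pos.2 (mul_pos hpi ha)).ne'
  have hpiC : (Real.pi : ℂ) ≠ 0 := by exact_mod_cast hpi.ne'
  have hexp := Complex.exp_ne_zero (-((y : ℂ) * t))
  rw [eq_div_iff hsqrt]
  push_cast at hinv ⊢
  field_simp at hinv
  linear_combination hinv

end BesselKernel

section CuspEstimates

lemma norm_add_ofReal_mul_I_sq (x y : ℝ) : ‖(x : ℂ) + y * I‖ ^ 2 = x ^ 2 + y ^ 2 := by
  rw [← Complex.normSq_eq_norm_sq, Complex.normSq_add_mul_I]

lemma norm_intCast_mul_add_sq (c d : ℤ) (x y : ℝ) :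
    ‖(c : ℂ) * (x + y * I) + d‖ ^ 2 = (c * x + d) ^ 2 + c ^ 2 * y ^ 2 := by
  have hτ : (c : ℂ) * (x + y * I) + d = (c * x + d : ℝ) + (c * y : ℝ) * I := by
    push_cast
    ring
  rw [hτ, norm_add_ofReal_mul_I_sq]
  ring

lemma sq_add_sq_le_norm_mul_add_sq {c : ℤ} (hc : |c| = 1) (d : ℤ) {x : ℝ} (hx : |x| ≤ 1 / 2)
    (y : ℝ) : x ^ 2 + y ^ 2 ≤ ‖(c : ℂ) * (x + y * I) + d‖ ^ 2 := by
  have hcR : |(c : ℝ)| = 1 := by exact_mod_cast hc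
  have hc2 : (c : ℝ) ^ 2 = 1 := by rw [← sq_abs, hcR, one_pow]
  have hle : |x| ≤ |c * x + d| := by
    rcases eq_or_ne d 0 with rfl | hd
    · simp [abs_mul, hcR]
    · have hd1 : (1 : ℝ) ≤ |(d : ℝ)| := by exact_mod_cast Int.one_le_abs hd
      have htri : |(d : ℝ)| ≤ |c * x + d| + |(c : ℝ) * x| := by
        simpa using abs_sub (c * x + d) ((c : ℝ) * x)
      rw [abs_mul, hcR, one_mul] at htri
      linarith
  rw [norm_intCast_mul_add_sq, hc2, one_mul]
  exact add_le_add_left (sq_le_sq.2 hle) _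

lemma four_mul_le_norm_mul_add_sq {c d : ℤ} (hc : |c| = 2) (hd : d ≠ 0) {x : ℝ}
    (hx : |x| ≤ 1 / 2) (y : ℝ) :
    4 * ((|x| - 1 / 2) ^ 2 + y ^ 2) ≤ ‖(c : ℂ) * (x + y * I) + d‖ ^ 2 := by
  have hcR : |(c : ℝ)| = 2 := by exact_mod_cast hc
  have hc2 : (c : ℝ) ^ 2 = 4 := by
    rw [← sq_abs, hcR]
    norm_num
  have hd1 : (1 : ℝ) ≤ |(d : ℝ)| := by exact_mod_cast Int.one_le_abs hd
  have htri : |(d : ℝ)| ≤ |c * x + d| + |(c : ℝ) * x| := by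
    simpa using abs_sub (c * x + d) ((c : ℝ) * x)
  rw [abs_mul, hcR] at htri
  have hsq : (1 - 2 * |x|) ^ 2 ≤ (c * x + d) ^ 2 :=
    sq_le_sq.2 ((abs_of_nonneg (by linarith : 0 ≤ 1 - 2 * |x|)).trans_le (by linarith))
  rw [norm_intCast_mul_add_sq, hc2]
  linarith

lemma div_four_mul_sq_add_sq_le {y : ℝ} (hy : 0 < y) (s : ℝ) :
    y / (4 * (s ^ 2 + y ^ 2)) ≤ 1 / (8 * y) ∨
      y / (4 * (s ^ 2 + y ^ 2)) ≤ 1 / (4 * y) - s ^ 2 / (8 * y ^ 3) := by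
  rcases le_or_gt (y ^ 2) (s ^ 2) with hsy | hsy
  · left
    rw [div_le_div_iff₀ (by positivity) (by positivity)]
    linarith
  · right
    have hrhs : 1 / (4 * y) - s ^ 2 / (8 * y ^ 3) = (2 * y ^ 2 - s ^ 2) / (8 * y ^ 3) := by
      field_simp
      ring
    have hnonneg : 0 ≤ s ^ 2 * (y ^ 2 - s ^ 2) := mul_nonneg (sq_nonneg s) (sub_nonneg.2 hsy.le)
    rw [hrhs, div_le_div_iff₀ (by positivity) (by positivity)]
    linarith

lemma div_norm_mul_add_sq_le {x y : ℝ} (hx : |x| ≤ 1 / 2) (hy : 0 < y) (hy1 : y ≤ 1)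
    (hlt : y / (x ^ 2 + y ^ 2) < 1) {c d : ℤ} (hcd : IsCoprime c d) :
    y / ‖(c : ℂ) * (x + y * I) + d‖ ^ 2 ≤ 1 + 1 / (8 * y) ∨
      y / ‖(c : ℂ) * (x + y * I) + d‖ ^ 2 ≤ 1 / (4 * y) - (|x| - 1 / 2) ^ 2 / (8 * y ^ 3) := by
  have hpos : 0 < 1 / (8 * y) := by positivity
  have habs := abs_nonneg c
  obtain hc | hc | hc | hc : |c| = 0 ∨ |c| = 1 ∨ |c| = 2 ∨ 3 ≤ |c| := by omega
  · left
    obtain rfl := abs_eq_zero.1 hc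
    have hd : |(d : ℝ)| = 1 := by
      exact_mod_cast Int.isUnit_iff_abs_eq.1 (isCoprime_zero_left.1 hcd)
    have hone : ‖((0 : ℤ) : ℂ) * (x + y * I) + d‖ ^ 2 = 1 := by
      simp [hd]
    rw [hone]
    linarith
  · left
    have hle := div_le_div_of_nonneg_left hy.le (by positivity)
      (sq_add_sq_le_norm_mul_add_sq hc d hx y)
    linarith
  · have hd : d ≠ 0 := by
      rintro rfl
      have := Int.isUnit_iff_abs_eq.1 (isCoprime_zero_right.1 hcd)
      omega
    have hle := div_le_div_of_nonneg_left hy.le (by positivity)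
      (four_mul_le_norm_mul_add_sq hc hd hx y)
    rcases div_four_mul_sq_add_sq_le hy (|x| - 1 / 2) with h | h
    · left
      linarith
    · exact Or.inr (hle.trans h)
  · left
    have hcR : (3 : ℝ) ≤ |(c : ℝ)| := by exact_mod_cast hc
    have hc9 : 9 ≤ (c : ℝ) ^ 2 := by
      rw [← sq_abs]
      nlinarith
    have hle : 8 * y ^ 2 ≤ ‖(c : ℂ) * (x + y * I) + d‖ ^ 2 := by
      rw [norm_intCast_mul_add_sq]
      nlinarith [sq_nonneg (c * x + d : ℝ), sq_nonneg y]
    have := div_le_div_of_nonneg_left hy.le (by positivity) hle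
    have hcancel : y / (8 * y ^ 2) = 1 / (8 * y) := by field_simp
    linarith

/-- A majorant of `e^{-a}·exp (a·im τ / |cτ + d|²)` at `τ = x + iy`, `|x| ≤ 1/2`, over all coprime
`(c, d)`, valid away from the cusp `0`: the constant term accounts for `|c| ≠ 2`, and the two
Gaussians for the cusps `±1/2`. -/
def cuspMajorant (a y x : ℝ) : ℝ :=
  Real.exp (a / (8 * y)) + Real.exp (a / (4 * y)) *
    (Real.exp (-(a / (8 * y ^ 3)) * (x - 1 / 2) ^ 2) +
      Real.exp (-(a / (8 * y ^ 3)) * (x + 1 / 2) ^ 2))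

variable {a y : ℝ}

lemma one_le_cuspMajorant (ha : 0 ≤ a) (hy : 0 ≤ y) (x : ℝ) : 1 ≤ cuspMajorant a y x := by
  have h₁ : 1 ≤ Real.exp (a / (8 * y)) := Real.one_le_exp (by positivity)
  exact h₁.trans (le_add_of_nonneg_right (by positivity))

lemma exp_mul_div_norm_mul_add_sq_le (ha : 0 ≤ a) {x : ℝ} (hx : |x| ≤ 1 / 2) (hy : 0 < y)
    (hy1 : y ≤ 1) (hlt : y / (x ^ 2 + y ^ 2) < 1) {c d : ℤ} (hcd : IsCoprime c d) :
    Real.exp (a * (y / ‖(c : ℂ) * (x + y * I) + d‖ ^ 2)) ≤ Real.exp a * cuspMajorant a y x := by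
  set v := y / ‖(c : ℂ) * (x + y * I) + d‖ ^ 2
  set γ : ℝ → ℝ := fun s => Real.exp (-(a / (8 * y ^ 3)) * s ^ 2) with hγ
  have hγ_pos (s : ℝ) : 0 < γ s := Real.exp_pos _
  have hmaj : cuspMajorant a y x = Real.exp (a / (8 * y)) +
      Real.exp (a / (4 * y)) * (γ (x - 1 / 2) + γ (x + 1 / 2)) := rfl
  have hγ_abs : γ (|x| - 1 / 2) ≤ γ (x - 1 / 2) + γ (x + 1 / 2) := by
    rcases abs_choice x with h | h <;> rw [h]
    · exact le_add_of_nonneg_right (hγ_pos _).le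
    · rw [show γ (-x - 1 / 2) = γ (x + 1 / 2) by simp only [hγ]; ring_nf]
      exact le_add_of_nonneg_left (hγ_pos _).le
  rcases div_norm_mul_add_sq_le hx hy hy1 hlt hcd with hv | hv
  · calc Real.exp (a * v) ≤ Real.exp (a * (1 + 1 / (8 * y))) := by gcongr
      _ = Real.exp a * Real.exp (a / (8 * y)) := by
          rw [← Real.exp_add]
          ring_nf
      _ ≤ Real.exp a * cuspMajorant a y x := by
          rw [hmaj]
          gcongr
          exact le_add_of_nonneg_right (mul_nonneg (Real.exp_pos _).le
            (add_pos (hγ_pos _) (hγ_pos _)).le)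
  · calc Real.exp (a * v)
        ≤ Real.exp (a * (1 / (4 * y) - (|x| - 1 / 2) ^ 2 / (8 * y ^ 3))) := by gcongr
      _ = Real.exp (a / (4 * y)) * γ (|x| - 1 / 2) := by
          rw [hγ, ← Real.exp_add]
          ring_nf
      _ ≤ Real.exp (a / (4 * y)) * (γ (x - 1 / 2) + γ (x + 1 / 2)) := by gcongr
      _ ≤ cuspMajorant a y x := by
          rw [hmaj]
          exact le_add_of_nonneg_left (Real.exp_pos _).le
      _ ≤ Real.exp a * cuspMajorant a y x :=
          le_mul_of_one_le_left (zero_le_one.trans (one_le_cuspMajorant ha hy.le x))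
            (Real.one_le_exp ha)

lemma continuous_cuspMajorant (a y : ℝ) : Continuous (cuspMajorant a y) := by
  unfold cuspMajorant
  fun_prop

lemma integral_exp_neg_mul_add_sq_le {b : ℝ} (hb : 0 < b) (u : ℝ) :
    ∫ x in (-(1 / 2) : ℝ)..(1 / 2), Real.exp (-b * (x + u) ^ 2) ≤ √(Real.pi / b) := by
  rw [intervalIntegral.integral_of_le (by norm_num), ← integral_gaussian b,
    ← integral_add_right_eq_self (fun x : ℝ => Real.exp (-b * x ^ 2)) u]
  exact setIntegral_le_integral ((integrable_exp_neg_mul_sq hb).comp_add_right u)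
    (Eventually.of_forall fun x => (Real.exp_pos _).le)

lemma integral_cuspMajorant_le (ha : 0 < a) (hy : 0 < y) :
    ∫ x in (-(1 / 2) : ℝ)..(1 / 2), cuspMajorant a y x ≤
      Real.exp (a / (8 * y)) + Real.exp (a / (4 * y)) * (2 * √(Real.pi / (a / (8 * y ^ 3)))) := by
  have hb : 0 < a / (8 * y ^ 3) := by positivity
  have hint (u : ℝ) : IntervalIntegrable (fun x => Real.exp (-(a / (8 * y ^ 3)) * (x + u) ^ 2))
      volume (-(1 / 2)) (1 / 2) := (by fun_prop : Continuous _).intervalIntegrable _ _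
  have h₁ := integral_exp_neg_mul_add_sq_le hb (-(1 / 2))
  have h₂ := integral_exp_neg_mul_add_sq_le hb (1 / 2)
  simp only [cuspMajorant, sub_eq_add_neg]
  rw [intervalIntegral.integral_add (by simp) (((hint _).add (hint _)).const_mul _),
    intervalIntegral.integral_const_mul, intervalIntegral.integral_add (hint _) (hint _),
    intervalIntegral.integral_const, smul_eq_mul]
  norm_num only [one_mul]
  gcongr
  linarith

lemma rpow_neg_three_halves_le_mul_exp (ha : 0 < a) (hy : 0 < y) (hy1 : y ≤ 1) :
    y ^ (-(3 / 2) : ℝ) ≤ 128 / a ^ 2 * Real.exp (a / (8 * y)) := by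
  have hquad := Real.quadratic_le_exp_of_nonneg (x := a / (8 * y)) (by positivity)
  have hlin : 0 < a / (8 * y) := by positivity
  calc y ^ (-(3 / 2) : ℝ) ≤ y ^ (-2 : ℝ) :=
        Real.rpow_le_rpow_of_exponent_ge hy hy1 (by norm_num)
    _ = 128 / a ^ 2 * ((a / (8 * y)) ^ 2 / 2) := by
        rw [Real.rpow_neg hy.le, Real.rpow_two]
        field_simp
        norm_num
    _ ≤ 128 / a ^ 2 * Real.exp (a / (8 * y)) := by
        gcongr
        linarith

lemma rpow_mul_integral_cuspMajorant_le (ha : 0 < a) (hy : 0 < y) (hy1 : y ≤ 1) :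
    y ^ (-(3 / 2) : ℝ) * ∫ x in (-(1 / 2) : ℝ)..(1 / 2), cuspMajorant a y x ≤
      (128 / a ^ 2 + 2 * √(8 * Real.pi / a)) * Real.exp (a / (4 * y)) := by
  have hsq : Real.exp (a / (8 * y)) * Real.exp (a / (8 * y)) = Real.exp (a / (4 * y)) := by
    rw [← Real.exp_add]
    congr 1
    field_simp
    norm_num
  have hwidth : y ^ (-(3 / 2) : ℝ) * √(Real.pi / (a / (8 * y ^ 3))) = √(8 * Real.pi / a) := by
    rw [show Real.pi / (a / (8 * y ^ 3)) = y ^ 3 * (8 * Real.pi / a) by field_simp,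
      Real.sqrt_mul (by positivity), Real.sqrt_eq_rpow (y ^ 3), ← Real.rpow_natCast_mul hy.le,
      ← mul_assoc, ← Real.rpow_add hy]
    norm_num
  calc _ ≤ y ^ (-(3 / 2) : ℝ) * (Real.exp (a / (8 * y)) + Real.exp (a / (4 * y)) *
        (2 * √(Real.pi / (a / (8 * y ^ 3))))) := by
        gcongr
        exact integral_cuspMajorant_le ha hy
    _ = y ^ (-(3 / 2) : ℝ) * Real.exp (a / (8 * y)) +
        2 * √(8 * Real.pi / a) * Real.exp (a / (4 * y)) := by
        rw [← hwidth]
        ring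
    _ ≤ 128 / a ^ 2 * Real.exp (a / (8 * y)) * Real.exp (a / (8 * y)) +
        2 * √(8 * Real.pi / a) * Real.exp (a / (4 * y)) := by
        gcongr
        exact rpow_neg_three_halves_le_mul_exp ha hy hy1
    _ = _ := by
        rw [mul_assoc, hsq]
        ring

/-- Growth of `F` near the real line with exponential rate `a` and weight `3/2`: near the cusp `0`
(in the horoball `im τ ≥ |τ|²`) `F` is the multiple `A` of the Bessel kernel up to
`O((im τ)^{-3/2})`, and everywhere it is bounded by the kernel size at some cusp `-d/c`. -/
structure HasCuspGrowth (a : ℝ) (A : ℂ) (F : ℂ → ℂ) : Prop where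
  near_zero : ∃ K : ℝ, ∀ τ : ℂ, 0 < τ.im → 1 ≤ τ.im / ‖τ‖ ^ 2 →
    ‖F τ - A * besselKernel a (-I * τ)‖ ≤ K * τ.im ^ (-(3 / 2) : ℝ)
  everywhere : ∃ K : ℝ, ∀ τ : ℂ, 0 < τ.im → τ.im ≤ 1 → ∃ c d : ℤ, IsCoprime c d ∧
    ‖F τ‖ ≤ K * τ.im ^ (-(3 / 2) : ℝ) * Real.exp (a * (τ.im / ‖(c : ℂ) * τ + d‖ ^ 2))

variable {A : ℂ} {F : ℂ → ℂ}

lemma norm_besselKernel_le_of_div_lt_one (ha : 0 ≤ a) {τ : ℂ} (hτ : 0 < τ.im)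
    (hlt : τ.im / ‖τ‖ ^ 2 < 1) :
    ‖besselKernel a (-I * τ)‖ ≤ Real.exp a * τ.im ^ (-(3 / 2) : ℝ) := by
  have hre : (-I * τ).re = τ.im := by simp
  have hnorm : ‖-I * τ‖ = ‖τ‖ := by simp
  rw [norm_besselKernel a (by rwa [hre]), hre, hnorm]
  gcongr ?_ * ?_
  · exact Real.exp_le_exp.2 (mul_le_of_le_one_right ha hlt.le)
  · exact Real.rpow_le_rpow_of_nonpos hτ ((le_abs_self _).trans (Complex.abs_im_le_norm τ))
      (by norm_num)

lemma HasCuspGrowth.exists_norm_sub_le_of_div_lt_one (hF : HasCuspGrowth a A F) (ha : 0 ≤ a) :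
    ∃ K : ℝ, ∀ x y : ℝ, |x| ≤ 1 / 2 → 0 < y → y ≤ 1 → y / (x ^ 2 + y ^ 2) < 1 →
      ‖F (x + y * I) - A * besselKernel a (-I * (x + y * I))‖ ≤
        K * y ^ (-(3 / 2) : ℝ) * cuspMajorant a y x := by
  obtain ⟨K, hK⟩ := hF.everywhere
  refine ⟨(|K| + ‖A‖) * Real.exp a, fun x y hx hy hy1 hlt => ?_⟩
  obtain ⟨c, d, hcd, hFle⟩ := hK (x + y * I) (by simpa using hy) (by simpa using hy1)
  have hker := norm_besselKernel_le_of_div_lt_one (τ := x + y * I) ha (by simpa using hy)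
    (by simpa [norm_add_ofReal_mul_I_sq] using hlt)
  rw [im_add_ofReal_mul_I] at hFle hker
  set W := y ^ (-(3 / 2) : ℝ)
  set S := cuspMajorant a y x
  have hS : 1 ≤ S := one_le_cuspMajorant ha hy.le x
  calc ‖F (x + y * I) - A * besselKernel a (-I * (x + y * I))‖
      ≤ ‖F (x + y * I)‖ + ‖A‖ * ‖besselKernel a (-I * (x + y * I))‖ :=
        (norm_sub_le _ _).trans_eq (by rw [norm_mul])
    _ ≤ |K| * W * (Real.exp a * S) + ‖A‖ * (Real.exp a * W * S) := by
        gcongr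
        · refine hFle.trans ?_
          gcongr
          · exact le_abs_self K
          · exact exp_mul_div_norm_mul_add_sq_le ha hx hy hy1 hlt hcd
        · exact hker.trans (le_mul_of_one_le_right (by positivity) hS)
    _ = (|K| + ‖A‖) * Real.exp a * W * S := by ring

lemma HasCuspGrowth.exists_norm_sub_le (hF : HasCuspGrowth a A F) (ha : 0 ≤ a) :
    ∃ K : ℝ, 0 ≤ K ∧ ∀ x y : ℝ, |x| ≤ 1 / 2 → 0 < y → y ≤ 1 →
      ‖F (x + y * I) - A * besselKernel a (y - I * x)‖ ≤
        K * y ^ (-(3 / 2) : ℝ) * cuspMajorant a y x := by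
  obtain ⟨K₀, hK₀⟩ := hF.near_zero
  obtain ⟨K₁, hK₁⟩ := hF.exists_norm_sub_le_of_div_lt_one ha
  refine ⟨max |K₀| K₁, (abs_nonneg K₀).trans (le_max_left _ _), fun x y hx hy hy1 => ?_⟩
  have hS := one_le_cuspMajorant ha hy.le x
  have hs : (y : ℂ) - I * x = -I * (x + y * I) := by linear_combination (y : ℂ) * I_sq
  rw [hs]
  rcases le_or_gt 1 (y / (x ^ 2 + y ^ 2)) with hnear | hfar
  · have hle := hK₀ (x + y * I) (by simpa using hy)
      (by simpa [norm_add_ofReal_mul_I_sq] using hnear)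
    rw [im_add_ofReal_mul_I] at hle
    calc _ ≤ K₀ * y ^ (-(3 / 2) : ℝ) := hle
      _ ≤ max |K₀| K₁ * y ^ (-(3 / 2) : ℝ) := by
          gcongr
          exact (le_abs_self K₀).trans (le_max_left _ _)
      _ ≤ _ := le_mul_of_one_le_right (by positivity) hS
  · refine (hK₁ x y hx hy hy1 hfar).trans ?_
    gcongr
    exact le_max_right _ _

lemma exists_norm_setIntegral_compl_besselKernel_le (ha : 0 ≤ a) :
    ∃ K : ℝ, ∀ y t : ℝ, 0 < y → y ≤ 1 / 2 →
      ‖∫ x in (Set.Ioc (-(1 / 2) : ℝ) (1 / 2))ᶜ,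
        besselKernel a (y - I * x) * cexp ((y - I * x) * t)‖ ≤ K * Real.exp (y * t) := by
  set κ := Real.exp (a * 2) * (1 / 3) ^ (-(3 / 2) : ℝ)
  refine ⟨∫ x in (Set.Ioc (-(1 / 2) : ℝ) (1 / 2))ᶜ, κ * (1 + ‖x‖) ^ (-(3 / 2) : ℝ),
    fun y t hy hy2 => ?_⟩
  rw [← integral_mul_const]
  refine norm_integral_le_of_norm_le
    ((integrable_one_add_norm_rpow_neg_three_halves.const_mul κ).mul_const _).integrableOn
    ((ae_restrict_iff' measurableSet_Ioc.compl).2 (Eventually.of_forall fun x hx => ?_))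
  have hxabs : 1 / 2 ≤ |x| := by
    by_contra! hlt
    obtain ⟨hleft, hright⟩ := abs_lt.1 hlt
    exact hx ⟨hleft, hright.le⟩
  have hnorm := abs_le_norm_ofReal_sub_I_mul y x
  rw [norm_mul, norm_cexp_ofReal_sub_I_mul_mul]
  gcongr
  refine norm_besselKernel_vertical_line_le ha hy (by norm_num) (by nlinarith) ?_
  rw [Real.norm_eq_abs]
  linarith

lemma HasCuspGrowth.exists_norm_integral_sub_mul_cexp_le (hF : HasCuspGrowth a A F)
    (ha : 0 < a) : ∃ B : ℝ, ∀ y t : ℝ, 0 < y → y ≤ 1 →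
      ‖∫ x in (-(1 / 2) : ℝ)..(1 / 2),
        (F (x + y * I) - A * besselKernel a (y - I * x)) * cexp ((y - I * x) * t)‖ ≤
      B * (Real.exp (a / (4 * y)) * Real.exp (y * t)) := by
  obtain ⟨K, hK0, hK⟩ := hF.exists_norm_sub_le ha.le
  refine ⟨K * (128 / a ^ 2 + 2 * √(8 * Real.pi / a)), fun y t hy hy1 => ?_⟩
  calc _ ≤ ∫ x in (-(1 / 2) : ℝ)..(1 / 2),
        K * y ^ (-(3 / 2) : ℝ) * cuspMajorant a y x * Real.exp (y * t) := by
        refine intervalIntegral.norm_integral_le_of_norm_le (by norm_num)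
          (Eventually.of_forall fun x hx => ?_)
          (((continuous_cuspMajorant a y).const_mul _).mul_const _ |>.intervalIntegrable _ _)
        rw [norm_mul, norm_cexp_ofReal_sub_I_mul_mul]
        gcongr
        exact hK x y (abs_le.2 ⟨hx.1.le, hx.2⟩) hy hy1
    _ = K * (y ^ (-(3 / 2) : ℝ) * ∫ x in (-(1 / 2) : ℝ)..(1 / 2), cuspMajorant a y x) *
        Real.exp (y * t) := by
        rw [intervalIntegral.integral_mul_const, intervalIntegral.integral_const_mul]
        ring
    _ ≤ K * ((128 / a ^ 2 + 2 * √(8 * Real.pi / a)) * Real.exp (a / (4 * y))) *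
        Real.exp (y * t) :=
        mul_le_mul_of_nonneg_right (mul_le_mul_of_nonneg_left
          (rpow_mul_integral_cuspMajorant_le ha hy hy1) hK0) (Real.exp_pos _).le
    _ = _ := by ring

lemma HasCuspGrowth.exists_norm_integral_sub_le (hF : HasCuspGrowth a A F) (ha : 0 < a) :
    ∃ B : ℝ, ∀ y t : ℝ, 0 < y → y ≤ 1 / 2 → (Continuous fun x : ℝ => F (x + y * I)) →
      ‖(∫ x in (-(1 / 2) : ℝ)..(1 / 2), F (x + y * I) * cexp ((y - I * x) * t)) -
        A * ∫ x : ℝ, besselKernel a (y - I * x) * cexp ((y - I * x) * t)‖ ≤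
      B * (Real.exp (a / (4 * y)) * Real.exp (y * t)) := by
  obtain ⟨B, hB⟩ := hF.exists_norm_integral_sub_mul_cexp_le ha
  obtain ⟨L, hL⟩ := exists_norm_setIntegral_compl_besselKernel_le ha.le
  refine ⟨B + ‖A‖ * |L|, fun y t hy hy2 hcont => ?_⟩
  set k : ℝ → ℂ := fun x => besselKernel a (y - I * x)
  set e : ℝ → ℂ := fun x => cexp ((y - I * x) * t)
  have he_cont : Continuous e := by fun_prop
  have hk_cont : Continuous k := continuous_besselKernel_vertical_line hy
  have hke_int : Integrable fun x => k x * e x := integrable_besselKernel_mul_cexp ha.le hy t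
  have hFe := (hcont.fun_mul he_cont).intervalIntegrable (μ := volume) (-(1 / 2)) (1 / 2)
  have hke := (hk_cont.fun_mul he_cont).intervalIntegrable (μ := volume) (-(1 / 2)) (1 / 2)
  have hsplit : (∫ x in (-(1 / 2) : ℝ)..(1 / 2), F (x + y * I) * e x) - A * ∫ x, k x * e x =
      (∫ x in (-(1 / 2) : ℝ)..(1 / 2), (F (x + y * I) - A * k x) * e x) -
        A * ∫ x in (Set.Ioc (-(1 / 2) : ℝ) (1 / 2))ᶜ, k x * e x := by
    rw [← integral_add_compl (s := Set.Ioc (-(1 / 2) : ℝ) (1 / 2)) measurableSet_Ioc hke_int,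
      ← intervalIntegral.integral_of_le (by norm_num)]
    simp_rw [sub_mul, mul_assoc]
    rw [intervalIntegral.integral_sub hFe (hke.const_mul A), intervalIntegral.integral_const_mul]
    ring
  have houter : ‖A * ∫ x in (Set.Ioc (-(1 / 2) : ℝ) (1 / 2))ᶜ, k x * e x‖ ≤
      ‖A‖ * |L| * (Real.exp (a / (4 * y)) * Real.exp (y * t)) := by
    rw [norm_mul, mul_assoc]
    gcongr
    refine (hL y t hy hy2).trans ?_
    gcongr
    · exact le_abs_self L
    · exact le_mul_of_one_le_left (Real.exp_pos _).le (Real.one_le_exp (by positivity))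
  rw [hsplit, add_mul]
  exact (norm_sub_le _ _).trans (add_le_add (hB y t hy (by linarith)) houter)

/-- Saddle point estimate: the height `y = √(a/t)/2` balances `a/(4y)` and `yt`. -/
lemma HasCuspGrowth.exists_norm_coeff_sub_le (hF : HasCuspGrowth a A F) (ha : 0 < a)
    (hcont : ∀ y : ℝ, 0 < y → Continuous fun x : ℝ => F (x + y * I)) :
    ∃ B : ℝ, ∀ (t : ℝ) (c : ℂ), a ≤ t → (∀ y : ℝ, 0 < y →
      ∫ x in (-(1 / 2) : ℝ)..(1 / 2), F (x + y * I) * cexp ((y - I * x) * t) = c) →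
      ‖c - A * √(Real.pi / a) * Real.exp (2 * √(a * t))‖ ≤ B * Real.exp √(a * t) := by
  obtain ⟨B, hB⟩ := hF.exists_norm_integral_sub_le ha
  refine ⟨B + ‖A * √(Real.pi / a)‖, fun t c hat hc => ?_⟩
  have ht : 0 < t := ha.trans_le hat
  have hpi := Real.pi_pos
  set X := √(a * t) with hX
  have hX0 : 0 < X := Real.sqrt_pos.2 (mul_pos ha ht)
  have hXX : X ^ 2 = a * t := Real.sq_sqrt (mul_pos ha ht).le
  have haX : a ≤ X := Real.le_sqrt_of_sq_le (by nlinarith)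
  set y := a / (2 * X) with hy_def
  have hy : 0 < y := by positivity
  have hy2 : y ≤ 1 / 2 := by
    rw [hy_def, div_le_div_iff₀ (by positivity) two_pos]
    linarith
  have hexponent : Real.exp (a / (4 * y)) * Real.exp (y * t) = Real.exp X := by
    rw [← Real.exp_add, hy_def]
    congr 1
    field_simp
    linarith
  have hmain : A * ∫ x : ℝ, besselKernel a (y - I * x) * cexp ((y - I * x) * t) =
      A * √(Real.pi / a) * Real.exp (2 * X) - A * √(Real.pi / a) * Real.exp (-(2 * X)) := by
    have hsqrt : √(Real.pi / a) = Real.pi / √(Real.pi * a) := by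
      rw [eq_div_iff (by positivity), ← Real.sqrt_mul (by positivity),
        show Real.pi / a * (Real.pi * a) = Real.pi ^ 2 by field_simp, Real.sqrt_sq hpi.le]
    rw [integral_besselKernel_mul_cexp ha hy, ← hX, hsqrt, Real.sinh_eq]
    push_cast
    ring
  have hdecay : Real.exp (-(2 * X)) ≤ Real.exp X := Real.exp_le_exp.2 (by linarith)
  have hle := hB y t hy hy2 (hcont y hy)
  rw [hc y hy, hmain, hexponent, sub_sub_eq_add_sub, add_sub_right_comm] at hle
  rw [add_mul, ← sub_add_cancel (c - _) (-(A * √(Real.pi / a) * Real.exp (-(2 * X)))),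
    sub_neg_eq_add]
  refine norm_add_le_of_le hle ?_
  rw [norm_neg, norm_mul, Complex.norm_real, Real.norm_of_nonneg (Real.exp_pos _).le]
  gcongr

end CuspEstimates

section InversionAtZero

variable {m : ℕ} {H : ℤ → ℂ → ℂ}

lemma IsWeilVector.eq_besselKernel_mul_sum (hH : IsWeilVector 2 m H) (hm : 0 < m) {k : ℕ}
    (hk : k < 2 * m) {τ : ℂ} (hτ : 0 < τ.im) :
    H k τ = -(1 / √(2 * m)) * besselKernel 0 (-I * τ) *
      ∑ l ∈ Finset.range (2 * m), ee (l * k / (2 * m)) * H l (-1 / τ) := by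
  have hτ0 := ne_zero_of_im_pos hτ
  have hS := hH.neg_one_div hk (im_neg_one_div_pos hτ)
  rw [show -1 / (-1 / τ) = τ by field_simp] at hS
  rw [hS]
  congr 1
  set s := -I * τ with hs
  have hτs : τ = I * s := by
    rw [hs]
    linear_combination τ * I_sq
  have hs0 : s ≠ 0 := mul_ne_zero (neg_ne_zero.2 I_ne_zero) hτ0
  have hhalf : s ^ ((1 : ℂ) / 2) * s ^ ((1 : ℂ) / 2) = s := by
    rw [← Complex.cpow_add _ _ hs0, add_halves, Complex.cpow_one]
  have hhalf0 : s ^ ((1 : ℂ) / 2) ≠ 0 := left_ne_zero_of_mul (hhalf.trans_ne hs0)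
  have hbase : -I * (2 * m * (-1 / τ)) = ((2 * m : ℝ) : ℂ) / s := by
    rw [hτs]
    push_cast
    field_simp
  have hsqrt : (√(2 * m : ℝ) : ℂ) ≠ 0 :=
    Complex.ofReal_ne_zero.2 (by positivity)
  rw [hbase, ofReal_div_cpow_half (by positivity) (by simpa [hs] using hτ), besselKernel, hτs,
    ofReal_zero, zero_div, Complex.exp_zero, zpow_ofNat, div_pow, mul_pow, I_sq]
  field_simp
  linear_combination -hhalf

lemma norm_besselKernel_zero_le {s : ℂ} (hs : 0 < s.re) :
    ‖besselKernel 0 s‖ ≤ s.re ^ (-(3 / 2) : ℝ) := by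
  rw [norm_besselKernel 0 hs, zero_mul, Real.exp_zero, one_mul]
  exact Real.rpow_le_rpow_of_nonpos hs (Complex.re_le_norm s) (by norm_num)

lemma IsWeilVector.norm_sub_besselKernel_le (hH : IsWeilVector 2 m H) (hm : 0 < m) {a K : ℝ}
    {P : ℤ → ℂ} (hcusp : ∀ l : ℕ, l < 2 * m → ∀ τ : ℂ, 1 ≤ τ.im →
      ‖H l τ - P l * cexp (-I * a * τ)‖ ≤ K) {k : ℕ} (hk : k < 2 * m) {τ : ℂ} (hτ : 0 < τ.im)
    (hnear : 1 ≤ τ.im / ‖τ‖ ^ 2) :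
    ‖H k τ - -(1 / √(2 * m)) * (∑ l ∈ Finset.range (2 * m), ee (l * k / (2 * m)) * P l) *
      besselKernel a (-I * τ)‖ ≤ 1 / √(2 * m) * (2 * m * K) * τ.im ^ (-(3 / 2) : ℝ) := by
  have hτ0 := ne_zero_of_im_pos hτ
  have hre : (-I * τ).re = τ.im := by simp
  have hkernel : besselKernel a (-I * τ) =
      cexp (-I * a * (-1 / τ)) * besselKernel 0 (-I * τ) := by
    rw [besselKernel, besselKernel, ofReal_zero, zero_div, Complex.exp_zero,
      show (a : ℂ) / (-I * τ) = -I * a * (-1 / τ) by field_simp; rw [I_sq]; ring]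
    ring
  have hdiff : H k τ - -(1 / √(2 * m)) * (∑ l ∈ Finset.range (2 * m), ee (l * k / (2 * m)) * P l) *
      besselKernel a (-I * τ) = -(1 / √(2 * m)) * besselKernel 0 (-I * τ) *
        ∑ l ∈ Finset.range (2 * m), ee (l * k / (2 * m)) *
          (H l (-1 / τ) - P l * cexp (-I * a * (-1 / τ))) := by
    rw [hH.eq_besselKernel_mul_sum hm hk hτ, hkernel]
    simp only [mul_sub, Finset.sum_sub_distrib, ← mul_assoc, ← Finset.sum_mul]
    ring
  have hsum : ‖∑ l ∈ Finset.range (2 * m), ee (l * k / (2 * m)) *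
      (H l (-1 / τ) - P l * cexp (-I * a * (-1 / τ)))‖ ≤ 2 * m * K := by
    refine (norm_sum_le_of_le _ fun l hl => ?_).trans_eq (b := ∑ _l ∈ Finset.range (2 * m), K)
      (by simp)
    have hphase : ‖ee ((l : ℂ) * k / (2 * m))‖ = 1 :=
      norm_ee_eq_one (by rw_mod_cast [Complex.div_natCast_im, zero_div])
    rw [norm_mul, hphase, one_mul]
    exact hcusp l (Finset.mem_range.1 hl) _ (hnear.trans_eq (im_neg_one_div τ).symm)
  have hW := norm_besselKernel_zero_le (s := -I * τ) (by rwa [hre])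
  have hsqrt : ‖-(1 / (√(2 * m) : ℂ))‖ = 1 / √(2 * m) := by
    rw [norm_neg, norm_div, norm_one, Complex.norm_real, Real.norm_of_nonneg (Real.sqrt_nonneg _)]
  rw [hre] at hW
  rw [hdiff, norm_mul, norm_mul, hsqrt, mul_right_comm]
  have hK := (norm_nonneg _).trans hsum
  gcongr

lemma IsWeilVector.hasCuspGrowth (hH : IsWeilVector 2 m H) (hm : 0 < m) {a K : ℝ} (ha : 0 ≤ a)
    {P : ℤ → ℂ}
    (hstrip : ∀ l : ℕ, l < 2 * m → ∀ τ : ℂ, |τ.re| ≤ 1 / 2 → 1 / 2 ≤ τ.im →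
      ‖H l τ - P l * cexp (-I * a * τ)‖ ≤ K)
    (hcusp : ∀ l : ℕ, l < 2 * m → ∀ τ : ℂ, 1 ≤ τ.im → ‖H l τ - P l * cexp (-I * a * τ)‖ ≤ K)
    {k : ℕ} (hk : k < 2 * m) :
    HasCuspGrowth a (-(1 / √(2 * m)) * ∑ l ∈ Finset.range (2 * m), ee (l * k / (2 * m)) * P l)
      (H k) where
  near_zero := ⟨_, fun _ hτ hnear => hH.norm_sub_besselKernel_le hm hcusp hk hτ hnear⟩
  everywhere := by
    set S := ∑ l ∈ Finset.range (2 * m), ‖P l‖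
    have hbound (l : ℕ) (hl : l < 2 * m) (τ : ℂ) (hre : |τ.re| ≤ 1 / 2) (him : 1 / 2 ≤ τ.im) :
        ‖H l τ‖ ≤ (K + S) * Real.exp (a * τ.im) := by
      have hpolar : ‖P l * cexp (-I * a * τ)‖ ≤ S * Real.exp (a * τ.im) := by
        rw [norm_mul, Complex.norm_exp, show (-I * a * τ).re = a * τ.im by simp [Complex.mul_re]]
        gcongr
        exact Finset.single_le_sum (f := fun l : ℕ => ‖P l‖) (fun _ _ => norm_nonneg _)
          (Finset.mem_range.2 hl)
      have hdiff := hstrip l hl τ hre him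
      have hexp : 1 ≤ Real.exp (a * τ.im) :=
        Real.one_le_exp (mul_nonneg ha (by linarith))
      rw [add_mul, ← sub_add_cancel (H l τ) (P l * cexp (-I * a * τ))]
      exact norm_add_le_of_le (hdiff.trans (le_mul_of_one_le_right
        ((norm_nonneg _).trans hdiff) hexp)) hpolar
    refine ⟨√(2 * m) * (K + S), fun τ hτ hτ1 => ?_⟩
    obtain ⟨c, d, hcd, hle⟩ := hH.exists_norm_le hm one_le_two hbound hτ hτ1
    refine ⟨c, d, hcd, (hle k hk).trans_eq ?_⟩
    norm_num

end InversionAtZero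

section PolarCoefficients

lemma sum_range_neg_of_periodic {N : ℕ} {f : ℤ → ℂ} (hf : Function.Periodic f N) :
    ∑ l ∈ Finset.range N, f (-l) = ∑ l ∈ Finset.range N, f l := by
  have hshift : ∑ l ∈ Finset.range N, f (-(l + 1 : ℕ)) = ∑ l ∈ Finset.range N, f l := by
    rw [← Finset.sum_range_reflect]
    refine Finset.sum_congr rfl fun l hl => ?_
    rw [← hf]
    congr 1
    have := Finset.mem_range.1 hl
    omega
  have hends : f (-(N : ℕ)) = f (-(0 : ℕ)) := by
    rw [← hf]
    simp
  rw [← hshift, ← add_left_inj (f (-(0 : ℕ))), ← Finset.sum_range_succ' (fun l : ℕ => f (-l)),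
    Finset.sum_range_succ, hends]

lemma sum_range_ee_mul_eq_sum_cos_mul {N : ℕ} (hN : 0 < N) {P : ℤ → ℂ}
    (hper : Function.Periodic P N) (heven : ∀ l, P (-l) = P l) (k : ℤ) :
    ∑ l ∈ Finset.range N, ee (l * k / N) * P l =
      ∑ l ∈ Finset.range N, (Real.cos (2 * Real.pi * l * k / N) : ℂ) * P l := by
  have hN' : (N : ℂ) ≠ 0 := Nat.cast_ne_zero.2 hN.ne'
  have hf : Function.Periodic (fun l : ℤ => ee (l * k / N) * P l) N := fun l => by
    have hphase : ((l + N : ℤ) : ℂ) * k / N = l * k / N + k := by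
      push_cast
      field_simp
    simp only [hper l, hphase, ee_add_intCast]
  have hreflect := sum_range_neg_of_periodic hf
  have hcos (l : ℕ) : ee (l * k / N) + ee (-(l * k / N)) =
      2 * (Real.cos (2 * Real.pi * l * k / N) : ℂ) := by
    rw [Complex.ofReal_cos, Complex.two_cos, ee, ee]
    push_cast
    ring_nf
  simp only [Int.cast_natCast, Int.cast_neg, heven, neg_mul, neg_div] at hreflect
  rw [← mul_right_inj' (two_ne_zero' ℂ), two_mul]
  nth_rewrite 2 [← hreflect]
  simp only [← Finset.sum_add_distrib, ← add_mul, hcos, Finset.mul_sum, mul_assoc]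

/-- The coefficient of `q^{-1/4m}` in `h_l`: it is `C(-1, l)` when `-1 ≡ -l² (mod 4m)`, and there is
no such term otherwise. -/
def polarCoeff (m : ℕ) (C : ℤ → ℤ → ℂ) (l : ℤ) : ℂ :=
  if 4 * (m : ℤ) ∣ l ^ 2 - 1 then C (-1) l else 0

variable {m : ℕ} {C : ℤ → ℤ → ℂ}

lemma polarCoeff_neg (hC : ∀ Δ l : ℤ, C Δ (-l) = C Δ l) (l : ℤ) :
    polarCoeff m C (-l) = polarCoeff m C l := by
  simp only [polarCoeff, neg_sq, hC]

lemma polarCoeff_periodic (hC : ∀ Δ l : ℤ, C Δ (l + 2 * m) = C Δ l) :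
    Function.Periodic (polarCoeff m C) (2 * m : ℕ) := fun l => by
  have hdvd : 4 * (m : ℤ) ∣ (l + 2 * m) ^ 2 - 1 ↔ 4 * (m : ℤ) ∣ l ^ 2 - 1 := by
    rw [show (l + 2 * (m : ℤ)) ^ 2 - 1 = l ^ 2 - 1 + 4 * m * (l + m) by ring]
    exact dvd_add_left (dvd_mul_right _ _)
  push_cast
  simp only [polarCoeff, hdvd, hC]

lemma kapp_eq_neg_sum_polarCoeff (m : ℕ) (C : ℤ → ℤ → ℂ) (r : ℤ) :
    kapp m C r = -∑ l ∈ Finset.range (2 * m),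
      (Real.cos (Real.pi * l * r / m) : ℂ) * polarCoeff m C l := by
  have hset : (do let a ← Finset.range (2 * m); pure (a : ℤ) : Finset ℤ) =
      (Finset.range (2 * m)).image (fun a : ℕ => (a : ℤ)) := by
    ext x
    simp only [Finset.bind_def, Finset.pure_def, Finset.mem_sup, Finset.mem_singleton,
      Finset.mem_image, eq_comm]
  rw [kapp, Finset.sum_filter, hset, Finset.sum_image (Nat.cast_injective.injOn)]
  simp only [polarCoeff, Int.cast_natCast, mul_comm (C _ _), mul_ite, mul_zero]

lemma neg_sum_ee_mul_polarCoeff (hm : 0 < m) (hCper : ∀ Δ l : ℤ, C Δ (l + 2 * m) = C Δ l)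
    (hCeven : ∀ Δ l : ℤ, C Δ (-l) = C Δ l) (r : ℤ) :
    -∑ l ∈ Finset.range (2 * m), ee (l * r / (2 * m)) * polarCoeff m C l = kapp m C r := by
  have hcos := sum_range_ee_mul_eq_sum_cos_mul (N := 2 * m) (by omega) (polarCoeff_periodic hCper)
    (polarCoeff_neg hCeven) r
  push_cast at hcos
  have hm' : (m : ℝ) ≠ 0 := by positivity
  have harg (l : ℕ) : 2 * Real.pi * l * r / (2 * m) = Real.pi * l * r / m := by field_simp
  rw [hcos, kapp_eq_neg_sum_polarCoeff]
  simp only [← harg]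
  push_cast
  rfl

lemma kapp_periodic (hm : 0 < m) (C : ℤ → ℤ → ℂ) :
    Function.Periodic (kapp m C) (2 * m) := fun r => by
  have hm' : (m : ℝ) ≠ 0 := by positivity
  have hcos (l : ℕ) : Real.cos (Real.pi * l * (r + 2 * m : ℤ) / m) =
      Real.cos (Real.pi * l * r / m) := by
    rw [← Real.cos_add_nat_mul_two_pi (Real.pi * l * r / m) l]
    congr 1
    push_cast
    field_simp
  simp only [kapp_eq_neg_sum_polarCoeff, hcos]

end PolarCoefficients

section CoefficientAsymptotics

variable {m : ℕ}

/-- `f = ∑_{Δ ≡ -l² (mod 4m)} c(Δ) q^{Δ/4m}` on the upper half plane: the expansion of the theta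
coefficient `h_l` of a Jacobi form of index `m`, indexed by the integers `n = (Δ + l²) / 4m`. -/
def HasCoeffExpansion (m : ℕ) (c : ℤ → ℂ) (l : ℤ) (f : ℂ → ℂ) : Prop :=
  ∀ τ : ℂ, 0 < τ.im → HasSum (fun n : ℤ => c (4 * (m : ℤ) * n - l ^ 2) *
    ee (((4 * (m : ℤ) * n - l ^ 2 : ℤ) : ℂ) / (4 * (m : ℂ)) * τ)) (f τ)

/-- The completion `f + g*` of a mock modular form `f` with shadow `g`. -/
def completion (f g : ℂ → ℂ) (τ : ℂ) : ℂ := f τ + eich g τ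

section

variable {c : ℤ → ℂ} {C : ℤ → ℤ → ℂ} {l : ℤ} {f g : ℂ → ℂ}

lemma HasCoeffExpansion.hasSum_mul_ee (hf : HasCoeffExpansion m c l f) (hm : 0 < m) {τ : ℂ}
    (hτ : 0 < τ.im) :
    HasSum (fun n : ℤ => c (4 * m * n - l ^ 2) * ee ((n + -(l ^ 2 / (4 * m)) : ℝ) * τ)) (f τ) := by
  have hm' : (m : ℂ) ≠ 0 := Nat.cast_ne_zero.2 hm.ne'
  have hexponent (n : ℤ) : ((n + -(l ^ 2 / (4 * m)) : ℝ) : ℂ) =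
      ((4 * (m : ℤ) * n - l ^ 2 : ℤ) : ℂ) / (4 * m) := by
    push_cast
    field_simp
    ring
  simpa only [hexponent] using hf τ hτ

lemma HasCoeffExpansion.exists_norm_sub_le (hf : HasCoeffExpansion m (C · l) l f) (hm : 0 < m)
    (hOG : ∀ Δ < -1, C Δ l = 0) {δ : ℝ} (hδ : 0 < δ) :
    ∃ K : ℝ, ∀ τ : ℂ, δ ≤ τ.im →
      ‖f τ - polarCoeff m C l *
        cexp (-I * (Real.pi / (2 * m) : ℝ) * τ)‖ ≤ K := by
  have hm' : (0 : ℝ) < 4 * m := by positivity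
  have bound (s : Finset ℤ) (hs : ∀ n, 4 * (m : ℤ) * n - l ^ 2 = -1 → n ∈ s) :=
    exists_norm_sub_sum_le_of_hasSum_mul_ee s (α := -(l ^ 2 / (4 * m))) (fun n hn hc => by
      have hnonneg : 0 ≤ 4 * (m : ℤ) * n - l ^ 2 := by
        have hne := mt (hs n) hn
        have hge := mt (hOG _) hc
        omega
      rw [← sub_eq_add_neg, sub_nonneg, div_le_iff₀' hm']
      exact_mod_cast sub_nonneg.1 hnonneg) (fun τ hτ => hf.hasSum_mul_ee hm hτ) hδ
  rw [polarCoeff]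
  split_ifs with hdvd
  · obtain ⟨n₀, hn₀⟩ := hdvd
    obtain ⟨K, hK⟩ := bound {n₀} fun n hn => Finset.mem_singleton.2 <|
      mul_left_cancel₀ (show 4 * (m : ℤ) ≠ 0 by omega) (by omega)
    have hexponent : (n₀ + -(l ^ 2 / (4 * m)) : ℝ) = -(1 / (4 * m)) := by
      have hn₀' : (l : ℝ) ^ 2 - 1 = 4 * m * n₀ := by exact_mod_cast hn₀
      field_simp
      linarith
    have hpolar (τ : ℂ) : cexp (-I * (Real.pi / (2 * m) : ℝ) * τ) =
        ee ((-(1 / (4 * m)) : ℝ) * τ) := by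
      rw [ee]
      push_cast
      ring_nf
    refine ⟨K, fun τ hτ => ?_⟩
    have := hK τ hτ
    rwa [Finset.sum_singleton, hexponent, ← hn₀, sub_sub_cancel_left, ← hpolar] at this
  · obtain ⟨K, hK⟩ := bound ∅ fun n hn => absurd ⟨n, by omega⟩ hdvd
    exact ⟨K, by simpa only [zero_mul, Finset.sum_empty] using hK⟩

lemma HasCoeffExpansion.exists_norm_completion_sub_le (hf : HasCoeffExpansion m (C · l) l f)
    (hm : 0 < m) (hOG : ∀ Δ < -1, C Δ l = 0) (hghol : ∀ τ : ℂ, 0 < τ.im → DifferentiableAt ℂ g τ)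
    (hgbdd : ∃ B : ℝ, ∀ τ : ℂ, 1 ≤ τ.im → ‖g τ‖ ≤ B) :
    ∃ K : ℝ, ∀ τ : ℂ, (|τ.re| ≤ 1 / 2 ∧ 1 / 2 ≤ τ.im) ∨ 1 ≤ τ.im →
      ‖completion f g τ - polarCoeff m C l *
        cexp (-I * (Real.pi / (2 * m) : ℝ) * τ)‖ ≤ K := by
  obtain ⟨K, hK⟩ := hf.exists_norm_sub_le hm hOG one_half_pos
  obtain ⟨Kstrip, hstrip⟩ := exists_norm_eich_le hghol hgbdd (-(1 / 2)) (1 / 2) one_half_pos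
  obtain ⟨Kcusp, hcusp⟩ := exists_norm_eich_le_of_one_le_im hgbdd
  refine ⟨K + max Kstrip Kcusp, fun τ hτ => ?_⟩
  rw [completion, add_sub_right_comm]
  refine norm_add_le_of_le (hK τ (hτ.elim (·.2) one_half_lt_one.le.trans)) ?_
  rcases hτ with ⟨hre, him⟩ | him
  · exact (hstrip τ (abs_le.1 hre).1 (abs_le.1 hre).2 him).trans (le_max_left _ _)
  · exact (hcusp τ him).trans (le_max_right _ _)

lemma HasCoeffExpansion.integral_completion_mul_cexp (hf : HasCoeffExpansion m c l f) (hm : 0 < m)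
    (hfhol : ∀ τ : ℂ, 0 < τ.im → DifferentiableAt ℂ f τ)
    (hghol : ∀ τ : ℂ, 0 < τ.im → DifferentiableAt ℂ g τ)
    (hgbdd : ∃ B : ℝ, ∀ τ : ℂ, 1 ≤ τ.im → ‖g τ‖ ≤ B)
    (hT : ∀ τ : ℂ, 0 < τ.im →
      completion f g (τ + 1) = ee (-((l : ℂ) ^ 2 / (4 * m))) * completion f g τ)
    {y : ℝ} (hy : 0 < y) {Δ : ℤ} (hΔ : 0 < Δ) (hdvd : 4 * (m : ℤ) ∣ Δ + l ^ 2) :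
    ∫ x in (-(1 / 2) : ℝ)..(1 / 2), completion f g (x + y * I) *
      cexp ((y - I * x) * (Real.pi / (2 * m) * Δ : ℝ)) = c Δ := by
  obtain ⟨j, hj⟩ := hdvd
  have hexponent : (j + -(l ^ 2 / (4 * m)) : ℝ) = Δ / (4 * m) := by
    have hj' : (Δ : ℝ) + l ^ 2 = 4 * m * j := by exact_mod_cast hj
    field_simp
    linarith
  have hcoeff := integral_add_eich_mul_ee_neg (j := j) (fun τ hτ => hf.hasSum_mul_ee hm hτ)
    (fun τ hτ => (hfhol τ hτ).continuousAt) hghol hgbdd hy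
    (fun x => by simpa [completion] using hT (x + y * I) (by simpa))
    (by rw [hexponent]; positivity)
  have hphase (x : ℝ) : ee (-((Δ / (4 * m) : ℝ) * (x + y * I))) =
      cexp ((y - I * x) * (Real.pi / (2 * m) * Δ : ℝ)) := by
    rw [ee]
    congr 1
    push_cast
    linear_combination (-(Real.pi * Δ * y / (2 * m)) : ℂ) * I_sq
  rw [hexponent, ← hj, add_sub_cancel_right] at hcoeff
  simpa only [completion, hphase] using hcoeff

end

variable {h g : ℤ → ℂ → ℂ} {C : ℤ → ℤ → ℂ}

lemma hasCuspGrowth_completion (hm : 0 < m) (hOG : ∀ Δ l : ℤ, Δ < -1 → C Δ l = 0)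
    (hexp : ∀ l, HasCoeffExpansion m (C · l) l (h l))
    (hghol : ∀ l : ℤ, ∀ τ : ℂ, 0 < τ.im → DifferentiableAt ℂ (g l) τ)
    (hgbdd : ∀ l : ℤ, ∃ B : ℝ, ∀ τ : ℂ, 1 ≤ τ.im → ‖g l τ‖ ≤ B)
    (hH : IsWeilVector 2 m fun l => completion (h l) (g l)) {k : ℕ} (hk : k < 2 * m) :
    HasCuspGrowth (Real.pi / (2 * m)) (-(1 / √(2 * m)) *
      ∑ l ∈ Finset.range (2 * m), ee (l * k / (2 * m)) * polarCoeff m C l)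
      (completion (h k) (g k)) := by
  choose K hK using fun l : ℤ =>
    (hexp l).exists_norm_completion_sub_le hm (hOG · l) (hghol l) (hgbdd l)
  obtain ⟨M, hM⟩ := ((Finset.range (2 * m)).image fun l : ℕ => K l).exists_le
  have hKM (l : ℕ) (hl : l < 2 * m) : K l ≤ M :=
    hM _ (Finset.mem_image_of_mem _ (Finset.mem_range.2 hl))
  exact hH.hasCuspGrowth hm (by positivity)
    (fun l hl τ hre him => (hK l τ (.inl ⟨hre, him⟩)).trans (hKM l hl))
    (fun l hl τ him => (hK l τ (.inr him)).trans (hKM l hl)) hk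

lemma exists_norm_coeff_sub_kapp_le (hm : 0 < m)
    (hCper : ∀ Δ l : ℤ, C Δ (l + 2 * m) = C Δ l) (hCeven : ∀ Δ l : ℤ, C Δ (-l) = C Δ l)
    (hOG : ∀ Δ l : ℤ, Δ < -1 → C Δ l = 0)
    (hhol : ∀ l : ℤ, ∀ τ : ℂ, 0 < τ.im → DifferentiableAt ℂ (h l) τ)
    (hexp : ∀ l, HasCoeffExpansion m (C · l) l (h l))
    (hghol : ∀ l : ℤ, ∀ τ : ℂ, 0 < τ.im → DifferentiableAt ℂ (g l) τ)
    (hgbdd : ∀ l : ℤ, ∃ B : ℝ, ∀ τ : ℂ, 1 ≤ τ.im → ‖g l τ‖ ≤ B)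
    (hH : IsWeilVector 2 m fun l => completion (h l) (g l)) {k : ℕ} (hk : k < 2 * m) :
    ∃ B : ℝ, ∀ Δ : ℤ, 0 < Δ → 4 * (m : ℤ) ∣ Δ + k ^ 2 →
      ‖C Δ k - kapp m C k * Real.exp (Real.pi * √Δ / m)‖ ≤
        B * Real.exp (Real.pi * √Δ / (2 * m)) := by
  set a := Real.pi / (2 * m) with ha
  have ha0 : 0 < a := by positivity
  have hgrowth := hasCuspGrowth_completion hm hOG hexp hghol hgbdd hH hk
  obtain ⟨B, hB⟩ := hgrowth.exists_norm_coeff_sub_le ha0 fun y hy =>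
    (continuous_comp_horizontal_line (fun τ hτ => (hhol k τ hτ).continuousAt) hy).add
      (continuous_eich_horizontal_line (hghol k) (hgbdd k) hy)
  refine ⟨B, fun Δ hΔ hdvd => ?_⟩
  have hconst : √(Real.pi / a) = √(2 * m) := by
    rw [ha, div_div_cancel₀ Real.pi_ne_zero]
  have hsqrt : √(a * (a * Δ)) = Real.pi * √Δ / (2 * m) := by
    rw [← mul_assoc, Real.sqrt_mul (by positivity), Real.sqrt_mul_self ha0.le, ha,
      div_mul_eq_mul_div]
  have hleading : -(1 / (√(2 * m) : ℂ)) *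
      (∑ l ∈ Finset.range (2 * m), ee (l * k / (2 * m)) * polarCoeff m C l) * √(2 * m) =
        kapp m C k := by
    have hne : (√(2 * m : ℝ) : ℂ) ≠ 0 := Complex.ofReal_ne_zero.2 (by positivity)
    rw [← neg_sum_ee_mul_polarCoeff hm hCper hCeven]
    field_simp
    push_cast
    ring
  have hle : a ≤ a * Δ := le_mul_of_one_le_right ha0.le (by exact_mod_cast hΔ)
  have hbound := hB (a * Δ) (C Δ k) hle fun y hy =>
    (hexp k).integral_completion_mul_cexp hm (hhol k) (hghol k) (hgbdd k)
      (fun τ hτ => by simpa [neg_div] using hH.add_one hk hτ) hy hΔ (by simpa using hdvd)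
  rwa [hconst, hleading, hsqrt, show 2 * (Real.pi * √(Δ : ℝ) / (2 * m)) = Real.pi * √Δ / m by
    field_simp] at hbound

end CoefficientAsymptotics

/-- Theorem: let `φ = ∑_{ℓ mod 2m} h_ℓ·θ_{m,ℓ}` be a mock Jacobi form of weight 2 and index
`m` with optimal growth (coefficients `C(Δ,ℓ)`, shadow data `g_ℓ`, modular completion
`∑_ℓ (h_ℓ + g_ℓ*)·θ_{m,ℓ}`). Then for each `r`, as `Δ → ∞` with `Δ ≡ -r² (mod 4m)`, one has
`C(Δ,r) = κ_r·e^{π√Δ/m} + O(e^{π√Δ/2m})`. -/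
theorem mock_jacobi_coefficient_asymptotics (m : ℕ) (hm : 0 < m)
    (h g : ℤ → ℂ → ℂ) (C : ℤ → ℤ → ℂ)
    (hper : ∀ l : ℤ, h (l + 2 * (m : ℤ)) = h l) (hsym : ∀ l : ℤ, h (-l) = h l)
    (hCper : ∀ Δ l : ℤ, C Δ (l + 2 * (m : ℤ)) = C Δ l)
    (hCsym : ∀ Δ l : ℤ, C Δ (-l) = C Δ l)
    (hOG : ∀ Δ l : ℤ, Δ < -1 → C Δ l = 0)
    (hhol : ∀ l : ℤ, ∀ τ : ℂ, 0 < τ.im → DifferentiableAt ℂ (h l) τ)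
    (hsum : ∀ l : ℤ, ∀ τ : ℂ, 0 < τ.im →
      HasSum (fun n : ℤ => C (4 * (m : ℤ) * n - l ^ 2) l *
        ee (((4 * (m : ℤ) * n - l ^ 2 : ℤ) : ℂ) / (4 * (m : ℂ)) * τ)) (h l τ))
    (hgper : ∀ l : ℤ, g (l + 2 * (m : ℤ)) = g l) (hgsym : ∀ l : ℤ, g (-l) = g l)
    (hghol : ∀ l : ℤ, ∀ τ : ℂ, 0 < τ.im → DifferentiableAt ℂ (g l) τ)
    (hgbdd : ∀ l : ℤ, ∃ B : ℝ, ∀ τ : ℂ, 1 ≤ τ.im → ‖g l τ‖ ≤ B)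
    (hmod : ModularLaw 2 m (fun τ z =>
      ∑ l ∈ Finset.range (2 * m), (h (l : ℤ) τ + eich (g (l : ℤ)) τ) * jTheta m (l : ℤ) τ z)) :
    ∀ r : ℤ, ∃ (B : ℝ) (Δ₀ : ℤ), ∀ Δ : ℤ, Δ₀ ≤ Δ → 0 < Δ → (4 * (m : ℤ)) ∣ (Δ + r ^ 2) →
      ‖C Δ r - kapp m C r * (Real.exp (Real.pi * Real.sqrt (Δ : ℝ) / (m : ℝ)) : ℂ)‖ ≤
        B * Real.exp (Real.pi * Real.sqrt (Δ : ℝ) / (2 * (m : ℝ))) := by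
  intro r
  have hpos : (0 : ℤ) < 2 * m := by omega
  obtain ⟨k, hk⟩ := Int.eq_ofNat_of_zero_le (Int.emod_nonneg r hpos.ne')
  obtain ⟨q, hr⟩ : ∃ q : ℤ, r = k + q • (2 * (m : ℤ)) :=
    ⟨r / (2 * m), by rw [← hk, smul_eq_mul, Int.emod_add_ediv_mul]⟩
  have hklt : k < 2 * m := by
    have := Int.emod_lt_of_pos r hpos
    omega
  have hweil : IsWeilVector 2 m fun l => completion (h l) (g l) := hmod.isWeilVector hm
  obtain ⟨B, hB⟩ :=
    exists_norm_coeff_sub_kapp_le hm hCper hCsym hOG hhol hsum hghol hgbdd hweil hklt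
  refine ⟨B, 0, fun Δ _ hΔ hdvd => ?_⟩
  have hC : Function.Periodic (C Δ) (2 * m) := hCper Δ
  rw [hr, smul_eq_mul, show Δ + (k + q * (2 * m)) ^ 2 = Δ + k ^ 2 + 4 * m * (k * q + m * q ^ 2) by
    ring, dvd_add_left (dvd_mul_right _ _)] at hdvd
  rw [hr, hC.zsmul q k, (kapp_periodic hm C).zsmul q k]
  exact hB Δ hΔ hdvd
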